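/- arXiv:1101.0182 — 5 statements merged into one kernel-verified Lean document; each statement's English description precedes it below -/
import Mathlib

section
/- Let q = q(n) < log(n)/n and let γ = γ(n) satisfy 1/(log log n) ≤ γ ≤ 1. Then with probability 1 − o(n^{−1}), the random digraph D_{n,q} has the following property: for every vertex set S₀ with |S₀| ≤ (1/3)·n^{1−γ} and every chain S₀ ⊆ S₁ ⊆ ⋯ ⊆ S_T in which each S_{t+1} is obtained from S_t by adding a single vertex v ∉ S_t having at least 3 out-neighbors in S_t, every set in the chain has fewer than n^{1−γ} vertices. -/
open MeasureTheory Filter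

/-- The Bernoulli measure on `Bool` with success probability `p` (clamped into `[0,1]`;
for `0 ≤ p ≤ 1` this is the genuine Bernoulli measure). -/
noncomputable def bernoulliM (p : ℝ) : Measure Bool :=
  (PMF.bernoulli (min (Real.toNNReal p) 1) (min_le_right _ _)).toMeasure

instance (p : ℝ) : IsProbabilityMeasure (bernoulliM p) := by
  unfold bernoulliM; infer_instance

/-- The random digraph `D_{n,p}`: each ordered pair of distinct vertices of `Fin n` is
independently a directed edge with probability `p` (the diagonal coordinates are sampled
but never consulted). -/
noncomputable def dnp (n : ℕ) (p : ℝ) : Measure (Fin n × Fin n → Bool) :=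
  Measure.pi fun _ => bernoulliM p

/-- `S` is, up to time `T`, a chain in which each `S (t+1)` is obtained from `S t` by
adding a single vertex `v ∉ S t` having at least `3` out-neighbors (in the digraph `ω`)
inside `S t`. -/
def IsGrowthChain3 {n : ℕ} (ω : Fin n × Fin n → Bool) (S : ℕ → Finset (Fin n))
    (T : ℕ) : Prop :=
  ∀ t < T, ∃ v ∉ S t,
    3 ≤ ((S t).filter fun w => w ≠ v ∧ ω (v, w) = true).card ∧
    S (t + 1) = insert v (S t)

/-!
A growth chain that reaches `s` vertices from at most `s / 3` makes at least `2 * s / 3` steps, each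
of which creates three new edges, so it exhibits a set of `s` vertices spanning at least `2 * s`
edges. The expected number of such sets in `D_{n,p}` is at most
`(n choose s) * (s * (s - 1) choose 2 * s) * p ^ (2 * s) ≤ x ^ s` with `x = 6 * n * s * p ^ 2`, and
`x ≤ 6 * s * (log n) ^ 2 / n` when `p ≤ log n / n`. If `s ≥ 2 * log n`, then `x ≤ 1 / e` makes this
at most `n⁻²`; if `s < 2 * log n`, then `x ≤ n ^ (-2 / 3)`, which is enough because `s ≥ 3`: one
or two vertices span fewer than twice as many edges.
-/

open scoped Finset

section GrowthChain

variable {n : ℕ} {ω : Fin n × Fin n → Bool}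

/-- The edges of the digraph `ω` with both endpoints in `A`. The diagonal is left out, since the
diagonal coordinates of `ω` do not represent edges. -/
def edgesInside (ω : Fin n × Fin n → Bool) (A : Finset (Fin n)) : Finset (Fin n × Fin n) :=
  {e ∈ A.offDiag | ω e = true}

lemma card_edgesInside_le (ω : Fin n × Fin n → Bool) (A : Finset (Fin n)) :
    #(edgesInside ω A) ≤ #A * #A - #A :=
  (Finset.card_filter_le _ _).trans_eq A.offDiag_card

lemma card_edgesInside_add_card_outNeighbors_le {A : Finset (Fin n)} {v : Fin n} (hv : v ∉ A) :
    #(edgesInside ω A) + #{w ∈ A | w ≠ v ∧ ω (v, w) = true} ≤ #(edgesInside ω (insert v A)) := by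
  set newEdges := Finset.map (.sectR v (Fin n)) {w ∈ A | w ≠ v ∧ ω (v, w) = true}
  have disjoint_newEdges : Disjoint (edgesInside ω A) newEdges := by
    simp only [Finset.disjoint_left, edgesInside, newEdges, Finset.mem_filter, Finset.mem_offDiag,
      Finset.mem_map, Function.Embedding.sectR_apply]
    rintro _ ⟨⟨hvA, -⟩, -⟩ ⟨w, -, rfl⟩
    exact hv hvA
  have union_subset : edgesInside ω A ∪ newEdges ⊆ edgesInside ω (insert v A) := by
    refine Finset.union_subset
      (Finset.filter_subset_filter _ (Finset.offDiag_mono (Finset.subset_insert v A))) ?_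
    simp only [Finset.subset_iff, edgesInside, newEdges, Finset.mem_filter, Finset.mem_offDiag,
      Finset.mem_map, Function.Embedding.sectR_apply]
    rintro _ ⟨w, ⟨hwA, hwv, hω⟩, rfl⟩
    exact ⟨⟨Finset.mem_insert_self v A, Finset.mem_insert_of_mem hwA, hwv.symm⟩, hω⟩
  calc #(edgesInside ω A) + #{w ∈ A | w ≠ v ∧ ω (v, w) = true}
      = #(edgesInside ω A ∪ newEdges) := by
        rw [Finset.card_union_of_disjoint disjoint_newEdges, Finset.card_map]
    _ ≤ #(edgesInside ω (insert v A)) := Finset.card_le_card union_subset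

namespace IsGrowthChain3

variable {S : ℕ → Finset (Fin n)} {T t : ℕ}

lemma card_eq_add (h : IsGrowthChain3 ω S T) (ht : t ≤ T) : #(S t) = #(S 0) + t := by
  induction t with
  | zero => rfl
  | succ t ih =>
    obtain ⟨v, hv, -, hS⟩ := h t ht
    rw [hS, Finset.card_insert_of_notMem hv, ih (Nat.le_of_succ_le ht), add_assoc]

lemma three_mul_le_card_edgesInside (h : IsGrowthChain3 ω S T) (ht : t ≤ T) :
    3 * t ≤ #(edgesInside ω (S t)) := by
  induction t with
  | zero => exact Nat.zero_le _
  | succ t ih =>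
    obtain ⟨v, hv, three_le, hS⟩ := h t ht
    rw [hS]
    have := card_edgesInside_add_card_outNeighbors_le (ω := ω) hv
    have := ih (Nat.le_of_succ_le ht)
    lia

lemma exists_two_mul_le_card_edgesInside (h : IsGrowthChain3 ω S T) (ht : t ≤ T) {s : ℕ}
    (h_start : 3 * #(S 0) ≤ s) (h_reach : s ≤ #(S t)) :
    ∃ A : Finset (Fin n), #A = s ∧ 2 * s ≤ #(edgesInside ω A) := by
  have card_t := h.card_eq_add ht
  have hT : s - #(S 0) ≤ T := by lia
  have card_s := h.card_eq_add hT
  have edges_s := h.three_mul_le_card_edgesInside hT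
  exact ⟨S (s - #(S 0)), by lia, by lia⟩

end IsGrowthChain3

end GrowthChain

section FirstMoment

lemma measureReal_le_card_mul_of_subset_biUnion {Ω ι : Type*} [MeasurableSpace Ω] {μ : Measure Ω}
    [IsFiniteMeasure μ] {B : Set Ω} {I : Finset ι} {f : ι → Set Ω} {c : ℝ}
    (hB : B ⊆ ⋃ i ∈ I, f i) (hf : ∀ i ∈ I, μ.real (f i) ≤ c) : μ.real B ≤ #I * c :=
  calc μ.real B ≤ μ.real (⋃ i ∈ I, f i) := measureReal_mono hB (measure_ne_top _ _)
    _ ≤ ∑ i ∈ I, μ.real (f i) := measureReal_biUnion_finset_le I f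
    _ ≤ #I * c := (Finset.sum_le_card_nsmul I _ c hf).trans_eq (nsmul_eq_mul _ _)

variable {p : ℝ}

lemma bernoulliM_real_true_le (hp : 0 ≤ p) : (bernoulliM p).real {true} ≤ p := by
  have mass_true : bernoulliM p {true} = (min p.toNNReal 1 : NNReal) :=
    PMF.toMeasure_apply_singleton _ _ (measurableSet_singleton _)
  rw [measureReal_def, mass_true, ENNReal.coe_toReal, NNReal.coe_min, Real.coe_toNNReal p hp]
  exact min_le_left _ _

variable {ι : Type*} [Fintype ι]

lemma pi_bernoulliM_real_forall_mem_eq_true_le (hp : 0 ≤ p) (F : Finset ι) :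
    (Measure.pi fun _ : ι => bernoulliM p).real {ω | ∀ e ∈ F, ω e = true} ≤ p ^ #F := by
  have event_eq : {ω : ι → Bool | ∀ e ∈ F, ω e = true} = (F : Set ι).pi fun _ => {true} := rfl
  rw [event_eq, measureReal_def, Measure.pi_pi_finset, Finset.prod_const, ENNReal.toReal_pow]
  exact pow_le_pow_left₀ measureReal_nonneg (bernoulliM_real_true_le hp) _

lemma pi_bernoulliM_real_le_card_filter_le (hp : 0 ≤ p) (E : Finset ι) (k : ℕ) :
    (Measure.pi fun _ : ι => bernoulliM p).real {ω | k ≤ #{e ∈ E | ω e = true}} ≤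
      (#E).choose k * p ^ k := by
  have event_subset : {ω : ι → Bool | k ≤ #{e ∈ E | ω e = true}} ⊆
      ⋃ F ∈ E.powersetCard k, {ω | ∀ e ∈ F, ω e = true} := by
    intro ω hω
    obtain ⟨F, hF, card_F⟩ := Finset.exists_subset_card_eq hω
    exact Set.mem_biUnion
      (Finset.mem_powersetCard.mpr ⟨hF.trans (Finset.filter_subset _ _), card_F⟩)
      fun e he => (Finset.mem_filter.mp (hF he)).2
  rw [← Finset.card_powersetCard]
  refine measureReal_le_card_mul_of_subset_biUnion event_subset fun F hF => ?_
  rw [← (Finset.mem_powersetCard.mp hF).2]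
  exact pi_bernoulliM_real_forall_mem_eq_true_le hp F

instance dnp.instIsProbabilityMeasure (n : ℕ) (p : ℝ) : IsProbabilityMeasure (dnp n p) := by
  unfold dnp
  infer_instance

lemma dnp_real_exists_le_card_edgesInside_le (hp : 0 ≤ p) (n s k : ℕ) :
    (dnp n p).real {ω | ∃ A : Finset (Fin n), #A = s ∧ k ≤ #(edgesInside ω A)} ≤
      n.choose s * ((s * s - s).choose k * p ^ k) := by
  have event_subset : {ω | ∃ A : Finset (Fin n), #A = s ∧ k ≤ #(edgesInside ω A)} ⊆
      ⋃ A ∈ Finset.univ.powersetCard s, {ω | k ≤ #(edgesInside ω A)} := by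
    rintro ω ⟨A, card_A, hA⟩
    exact Set.mem_biUnion (Finset.mem_powersetCard_univ.mpr card_A) hA
  have card_sets : #(Finset.univ.powersetCard s : Finset (Finset (Fin n))) = n.choose s := by
    rw [Finset.card_powersetCard, Finset.card_fin]
  rw [← card_sets]
  refine measureReal_le_card_mul_of_subset_biUnion event_subset fun A hA => ?_
  rw [← Finset.mem_powersetCard_univ.mp hA, ← Finset.offDiag_card]
  exact pi_bernoulliM_real_le_card_filter_le hp A.offDiag k

end FirstMoment

section BinomialEstimates

lemma choose_le_exp_one_mul_div_pow (m k : ℕ) :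
    (m.choose k : ℝ) ≤ (Real.exp 1 * m / k) ^ k := by
  rcases k.eq_zero_or_pos with rfl | hk
  · simp
  have inv_factorial_le : 1 / (k.factorial : ℝ) ≤ Real.exp 1 ^ k / k ^ k := by
    rw [← Real.exp_nat_mul, mul_one, le_div_iff₀ (by positivity), one_div_mul_eq_div]
    exact Real.pow_div_factorial_le_exp k k.cast_nonneg k
  calc (m.choose k : ℝ) ≤ m ^ k / k.factorial := Nat.choose_le_pow_div k m
    _ = m ^ k * (1 / k.factorial) := (mul_one_div _ _).symm
    _ ≤ m ^ k * (Real.exp 1 ^ k / k ^ k) := by gcongr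
    _ = (Real.exp 1 * m / k) ^ k := by rw [div_pow, mul_pow]; ring

lemma exp_one_pow_three_le : Real.exp 1 ^ 3 ≤ 24 :=
  calc Real.exp 1 ^ 3 ≤ 2.8 ^ 3 := by gcongr; linarith [Real.exp_one_lt_d9]
    _ ≤ 24 := by norm_num

lemma choose_mul_choose_mul_pow_le (n s : ℕ) (p : ℝ) :
    n.choose s * ((s * s - s).choose (2 * s) * p ^ (2 * s)) ≤ (6 * n * s * p ^ 2) ^ s := by
  rcases s.eq_zero_or_pos with rfl | hs
  · simp
  have choose_pairs_le : ((s * s - s).choose (2 * s) : ℝ) ≤ (Real.exp 1 * s / 2) ^ (2 * s) :=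
    calc ((s * s - s).choose (2 * s) : ℝ) ≤ (s * s).choose (2 * s) :=
          mod_cast Nat.choose_le_choose _ (Nat.sub_le _ _)
      _ ≤ (Real.exp 1 * (s * s : ℕ) / (2 * s : ℕ)) ^ (2 * s) := choose_le_exp_one_mul_div_pow _ _
      _ = (Real.exp 1 * s / 2) ^ (2 * s) := by
          congr 1
          push_cast
          field_simp
  have even_pow_nonneg : 0 ≤ p ^ (2 * s) := (even_two_mul s).pow_nonneg p
  calc n.choose s * ((s * s - s).choose (2 * s) * p ^ (2 * s))
      ≤ (Real.exp 1 * n / s) ^ s * ((Real.exp 1 * s / 2) ^ (2 * s) * p ^ (2 * s)) := by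
        gcongr
        exact choose_le_exp_one_mul_div_pow n s
    _ = (Real.exp 1 ^ 3 / 4 * (n * s * p ^ 2)) ^ s := by
        rw [pow_mul, pow_mul, ← mul_pow, ← mul_pow]
        congr 1
        field_simp
        ring
    _ ≤ (6 * (n * s * p ^ 2)) ^ s := by
        gcongr
        linarith [exp_one_pow_three_le]
    _ = (6 * n * s * p ^ 2) ^ s := by ring

end BinomialEstimates

section Asymptotics

lemma eventually_mul_log_pow_le_rpow (C : ℝ) (k : ℕ) {r : ℝ} (hr : 0 < r) :
    ∀ᶠ x : ℝ in atTop, C * Real.log x ^ k ≤ x ^ r := by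
  have log_isLittleO := (isLittleO_log_rpow_rpow_atTop k hr).const_mul_left C
  filter_upwards [log_isLittleO.bound one_pos, eventually_ge_atTop 0] with x hx hx0
  rw [one_mul, Real.rpow_natCast, Real.norm_of_nonneg (Real.rpow_nonneg hx0 r)] at hx
  exact (Real.le_norm_self _).trans hx

lemma eventually_mul_pow_le_exp_div_log (C : ℝ) (k : ℕ) :
    ∀ᶠ y : ℝ in atTop, C * y ^ k ≤ Real.exp (y / Real.log y) := by
  filter_upwards [eventually_mul_log_pow_le_rpow (k + 1) 2 one_pos, eventually_gt_atTop 1,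
    eventually_ge_atTop C] with y log_sq_le hy hC
  have hy0 : 0 < y := one_pos.trans hy
  have mul_log_le : (k + 1) * Real.log y ≤ y / Real.log y := by
    rw [le_div_iff₀ (Real.log_pos hy)]
    calc (k + 1) * Real.log y * Real.log y = (k + 1) * Real.log y ^ 2 := by ring
      _ ≤ y := by simpa only [Real.rpow_one] using log_sq_le
  calc C * y ^ k ≤ y * y ^ k := by gcongr
    _ = y ^ (k + 1) := (pow_succ' y k).symm
    _ = Real.exp ((k + 1) * Real.log y) := by
        rw [← Nat.cast_succ, Real.exp_nat_mul, Real.exp_log hy0]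
    _ ≤ Real.exp (y / Real.log y) := Real.exp_le_exp.mpr mul_log_le

lemma eventually_mul_rpow_mul_log_pow_le (C : ℝ) (k : ℕ) :
    ∀ᶠ x : ℝ in atTop, ∀ γ : ℝ, 1 / Real.log (Real.log x) ≤ γ →
      C * x ^ (1 - γ) * Real.log x ^ k ≤ x := by
  filter_upwards [Real.tendsto_log_atTop.eventually (eventually_mul_pow_le_exp_div_log C k),
    eventually_gt_atTop 1] with x mul_log_pow_le hx γ hγ
  have hx0 : 0 < x := one_pos.trans hx
  have exp_le : Real.exp (Real.log x / Real.log (Real.log x)) ≤ x ^ γ := by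
    rw [Real.rpow_def_of_pos hx0, div_eq_mul_one_div]
    have := Real.log_pos hx
    gcongr
  calc C * x ^ (1 - γ) * Real.log x ^ k = C * Real.log x ^ k * x ^ (1 - γ) := by ring
    _ ≤ x ^ γ * x ^ (1 - γ) := by
        gcongr
        exact mul_log_pow_le.trans exp_le
    _ = x := by rw [← Real.rpow_add hx0, add_sub_cancel, Real.rpow_one]

variable {x y : ℝ} {s : ℕ}

lemma pow_le_inv_sq_of_le_exp_neg_one (hy : 0 < y) (hx0 : 0 ≤ x) (hx : x ≤ Real.exp (-1))
    (hs : 2 * Real.log y ≤ s) : x ^ s ≤ (y ^ 2)⁻¹ :=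
  calc x ^ s ≤ Real.exp (-1) ^ s := by gcongr
    _ = Real.exp (-s) := by rw [← Real.exp_nat_mul, mul_neg_one]
    _ ≤ Real.exp (-(2 * Real.log y)) := Real.exp_le_exp.mpr (neg_le_neg hs)
    _ = (y ^ 2)⁻¹ := by
        rw [Real.exp_neg, ← Nat.cast_two, Real.exp_nat_mul, Real.exp_log hy]

lemma pow_le_inv_sq_of_le_rpow (hy : 1 ≤ y) (hx0 : 0 ≤ x) (hx : x ≤ y ^ (-2 / 3 : ℝ))
    (hs : 3 ≤ s) : x ^ s ≤ (y ^ 2)⁻¹ := by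
  have hx1 : x ≤ 1 := hx.trans (Real.rpow_le_one_of_one_le_of_nonpos hy (by norm_num))
  calc x ^ s ≤ x ^ 3 := pow_le_pow_of_le_one hx0 hx1 hs
    _ ≤ (y ^ (-2 / 3 : ℝ)) ^ 3 := by gcongr
    _ = (y ^ 2)⁻¹ := by
        rw [← Real.rpow_mul_natCast (by positivity), ← Real.rpow_natCast y 2,
          ← Real.rpow_neg (by positivity)]
        norm_num

lemma eventually_div_pow_le_inv_sq :
    ∀ᶠ y : ℝ in atTop, ∀ s : ℕ, 3 ≤ s → 6 * Real.exp 1 * s * Real.log y ^ 2 ≤ y →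
      (6 * s * Real.log y ^ 2 / y) ^ s ≤ (y ^ 2)⁻¹ := by
  filter_upwards [eventually_mul_log_pow_le_rpow 12 3 (r := 1 / 3) (by norm_num),
    eventually_ge_atTop 1] with y log_cube_le hy s hs h_small
  have hy0 : 0 < y := one_pos.trans_le hy
  have base_nonneg : 0 ≤ 6 * s * Real.log y ^ 2 / y := by positivity
  rcases le_total (2 * Real.log y) s with s_large | s_small
  · refine pow_le_inv_sq_of_le_exp_neg_one hy0 base_nonneg ?_ s_large
    rw [Real.exp_neg, div_le_iff₀ hy0, le_inv_mul_iff₀ (Real.exp_pos 1)]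
    linarith
  · refine pow_le_inv_sq_of_le_rpow hy base_nonneg ?_ hs
    have := Real.log_nonneg hy
    rw [div_le_iff₀ hy0]
    calc 6 * s * Real.log y ^ 2 ≤ 6 * (2 * Real.log y) * Real.log y ^ 2 := by gcongr
      _ = 12 * Real.log y ^ 3 := by ring
      _ ≤ y ^ (1 / 3 : ℝ) := log_cube_le
      _ = y ^ (-2 / 3 : ℝ) * y := by rw [← Real.rpow_add_one hy0.ne']; norm_num

end Asymptotics

lemma three_le_of_two_mul_le_mul_self_sub {s : ℕ} (hs : 0 < s) (h : 2 * s ≤ s * s - s) : 3 ≤ s := by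
  by_contra! hs3
  interval_cases s <;> lia

lemma eventually_dnp_real_exists_two_mul_le_card_edgesInside_le :
    ∀ᶠ n : ℕ in atTop, ∀ (s : ℕ) (p : ℝ), 0 < s → 0 ≤ p → p ≤ Real.log n / n →
      6 * Real.exp 1 * s * Real.log n ^ 2 ≤ n →
      (dnp n p).real {ω | ∃ A : Finset (Fin n), #A = s ∧ 2 * s ≤ #(edgesInside ω A)} ≤
        ((n : ℝ) ^ 2)⁻¹ := by
  filter_upwards [tendsto_natCast_atTop_atTop.eventually eventually_div_pow_le_inv_sq,
    eventually_gt_atTop 0] with n div_pow_le hn s p hs hp hp_le h_small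
  rcases lt_or_ge s 3 with s_lt | hs3
  · have event_empty :
        {ω | ∃ A : Finset (Fin n), #A = s ∧ 2 * s ≤ #(edgesInside ω A)} = ∅ := by
      refine Set.eq_empty_of_forall_notMem ?_
      rintro ω ⟨A, rfl, hA⟩
      exact s_lt.not_ge
        (three_le_of_two_mul_le_mul_self_sub hs (hA.trans (card_edgesInside_le ω A)))
    rw [event_empty, measureReal_empty]
    positivity
  · calc (dnp n p).real {ω | ∃ A : Finset (Fin n), #A = s ∧ 2 * s ≤ #(edgesInside ω A)}
        ≤ n.choose s * ((s * s - s).choose (2 * s) * p ^ (2 * s)) :=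
          dnp_real_exists_le_card_edgesInside_le hp n s (2 * s)
      _ ≤ (6 * n * s * p ^ 2) ^ s := choose_mul_choose_mul_pow_le n s p
      _ ≤ (6 * n * s * (Real.log n / n) ^ 2) ^ s := by gcongr
      _ = (6 * s * Real.log n ^ 2 / n) ^ s := by
          congr 1
          field_simp
      _ ≤ ((n : ℝ) ^ 2)⁻¹ := div_pow_le s hs3 h_small

lemma exists_two_mul_le_card_edgesInside_of_large_growthChain {n : ℕ} {ω : Fin n × Fin n → Bool}
    {N : ℝ} (h : ¬ ∀ (S : ℕ → Finset (Fin n)) (T : ℕ), (#(S 0) : ℝ) ≤ 1 / 3 * N →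
      IsGrowthChain3 ω S T → ∀ t ≤ T, (#(S t) : ℝ) < N) :
    ∃ A : Finset (Fin n), #A = ⌈N⌉₊ ∧ 2 * ⌈N⌉₊ ≤ #(edgesInside ω A) := by
  push Not at h
  obtain ⟨S, T, h_start, h_chain, t, ht, h_reach⟩ := h
  have three_mul_le : 3 * #(S 0) ≤ ⌈N⌉₊ := by
    have : (3 * #(S 0) : ℝ) ≤ ⌈N⌉₊ := by linarith [Nat.le_ceil N]
    exact_mod_cast this
  exact h_chain.exists_two_mul_le_card_edgesInside ht three_mul_le (Nat.ceil_le.mpr h_reach)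

/-- The constant comes from `6 * s * (log n) ^ 2 / n ≤ 1 / e` with `s = ⌈N n⌉₊`, where a factor `2`
pays for the rounding. -/
theorem growth_chain_small_whp_general (q N : ℕ → ℝ)
    (hq : ∀ᶠ n : ℕ in atTop, 0 ≤ q n ∧ q n ≤ Real.log n / n)
    (hN : ∀ᶠ n : ℕ in atTop, 0 < N n ∧ 12 * Real.exp 1 * N n * Real.log n ^ 2 ≤ n) :
    Tendsto
      (fun n : ℕ =>
        (n : ℝ) *
          (dnp n (q n) {ω | ¬ ∀ (S : ℕ → Finset (Fin n)) (T : ℕ),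
              ((S 0).card : ℝ) ≤ 1 / 3 * N n →
              IsGrowthChain3 ω S T →
              ∀ t ≤ T, ((S t).card : ℝ) < N n}).toReal)
      atTop (nhds 0) := by
  refine squeeze_zero' (.of_forall fun n => by positivity) ?_
    (tendsto_inv_atTop_nhds_zero_nat (𝕜 := ℝ))
  have log_sq_le := tendsto_natCast_atTop_atTop.eventually
    (eventually_mul_log_pow_le_rpow (12 * Real.exp 1) 2 one_pos)
  filter_upwards [hq, hN, log_sq_le, eventually_dnp_real_exists_two_mul_le_card_edgesInside_le,
    eventually_gt_atTop 0] with n ⟨hq0, hq_le⟩ ⟨hN0, hN_le⟩ log_sq_le dense_le hn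
  rw [Real.rpow_one] at log_sq_le
  have ceil_small : 6 * Real.exp 1 * ⌈N n⌉₊ * Real.log n ^ 2 ≤ n :=
    calc 6 * Real.exp 1 * ⌈N n⌉₊ * Real.log n ^ 2
        ≤ 6 * Real.exp 1 * (N n + 1) * Real.log n ^ 2 := by
          gcongr
          exact (Nat.ceil_lt_add_one hN0.le).le
      _ ≤ (n : ℝ) := by linarith
  calc (n : ℝ) * (dnp n (q n)).real _
      ≤ n * ((n : ℝ) ^ 2)⁻¹ := by
        gcongr
        refine (measureReal_mono fun ω =>
          exists_two_mul_le_card_edgesInside_of_large_growthChain).trans ?_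
        exact dense_le _ _ (Nat.ceil_pos.mpr hN0) hq0 hq_le ceil_small
    _ = (n : ℝ)⁻¹ := by field_simp

/-- For `q = q(n) < log n / n` and `1/(log log n) ≤ γ = γ(n) ≤ 1`, with
probability `1 - o(n⁻¹)` the digraph `D_{n,q}` has the property that any growth chain
(adding vertices with at least 3 out-neighbors in the current set) started from a set of
size at most `(1/3)·n^{1-γ}` consists entirely of sets of fewer than `n^{1-γ}` vertices. -/
theorem growth_chain_small_whp (q γ : ℕ → ℝ)
    (hq : ∀ᶠ n : ℕ in atTop, 0 ≤ q n ∧ q n < Real.log n / n)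
    (hγ : ∀ᶠ n : ℕ in atTop, 1 / Real.log (Real.log n) ≤ γ n ∧ γ n ≤ 1) :
    Tendsto
      (fun n : ℕ =>
        (n : ℝ) *
          (dnp n (q n) {ω | ¬ ∀ (S : ℕ → Finset (Fin n)) (T : ℕ),
              ((S 0).card : ℝ) ≤ 1 / 3 * (n : ℝ) ^ (1 - γ n) →
              IsGrowthChain3 ω S T →
              ∀ t ≤ T, ((S t).card : ℝ) < (n : ℝ) ^ (1 - γ n)}).toReal)
      atTop (nhds 0) := by
  refine growth_chain_small_whp_general q _ (hq.mono fun n h => ⟨h.1, h.2.le⟩) ?_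
  filter_upwards [hγ, eventually_gt_atTop 0, tendsto_natCast_atTop_atTop.eventually
    (eventually_mul_rpow_mul_log_pow_le (12 * Real.exp 1) 2)] with n hγ hn small
  exact ⟨by positivity, small _ hγ.1⟩
end

section
/- Let q = q(n) satisfy q ≥ 0.98·log(n)/n. Then with high probability, fewer than n^{0.48} vertices of the Erdős–Rényi random graph G_{n,q} have degree at most (1/10)·log n. -/
open MeasureTheory Filter

/-- The Erdős–Rényi random graph `G_{n,p}`: each unordered pair of vertices of `Fin n`
is independently present with probability `p`. -/
noncomputable def gnp (n : ℕ) (p : ℝ) : Measure (Sym2 (Fin n) → Bool) :=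
  Measure.pi fun _ => bernoulliM p

/-- The degree of the vertex `v` in the graph described by `ω`. -/
def degB {n : ℕ} (ω : Sym2 (Fin n) → Bool) (v : Fin n) : ℕ :=
  (Finset.univ.filter fun u => u ≠ v ∧ ω s(u, v) = true).card

/-!
Fix `0 < r ≤ 1`. The indicator of `deg v ≤ a` is at most `r ^ (deg v - a)`, and the degree of `v`
counts successes among `n - 1` independent pairs, so the expected number of vertices of degree at
most `a` is at most `n * r ^ (-a) * (1 - p * (1 - r)) ^ (n - 1)`. For `p ≥ c * log n / n` and
`a = α * log n` this is `O(n ^ (1 - α * log r - c * (1 - r)))`. The best choice `r = α / c` turns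
the exponent into `1 - (c - α + α * log (α / c))`, where the bracket is the large deviation rate of
a Poisson variable of mean `c` at `α`. Markov's inequality concludes whenever this exponent is
smaller than the `β` of the threshold `n ^ β`.
-/

open scoped Topology

section Bernoulli

variable {p : ℝ}

lemma integral_bernoulliM {E : Type*} [NormedAddCommGroup E] [NormedSpace ℝ E] [CompleteSpace E]
    (hp₀ : 0 ≤ p) (hp₁ : p ≤ 1) (f : Bool → E) :
    ∫ b, f b ∂bernoulliM p = p • f true + (1 - p) • f false := by
  simp [bernoulliM, PMF.integral_eq_sum, PMF.bernoulli_apply, hp₀, hp₁]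

lemma integral_pow_card_filter_pi_bernoulliM {ι : Type*} [Fintype ι] (hp₀ : 0 ≤ p) (hp₁ : p ≤ 1)
    (r : ℝ) (s : Finset ι) :
    ∫ ω : ι → Bool, r ^ (s.filter fun i => ω i = true).card ∂Measure.pi (fun _ => bernoulliM p) =
      (1 - p * (1 - r)) ^ s.card := by
  classical
  let weight : ι → Bool → ℝ := fun i b => if i ∈ s then (if b = true then r else 1) else 1
  have pow_eq_prod (ω : ι → Bool) :
      r ^ (s.filter fun i => ω i = true).card = ∏ i, weight i (ω i) := by
    simp [weight, Finset.prod_ite_mem, Finset.prod_ite]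
  have integral_weight (i : ι) :
      ∫ b, weight i b ∂bernoulliM p = if i ∈ s then 1 - p * (1 - r) else 1 := by
    rw [integral_bernoulliM hp₀ hp₁]
    by_cases hi : i ∈ s
    · simp only [weight, hi, if_true, smul_eq_mul, Bool.false_eq_true, if_false]
      ring
    · simp [weight, hi]
  simp_rw [pow_eq_prod, integral_fintype_prod_eq_prod, integral_weight]
  simp [Finset.prod_ite_mem]

end Bernoulli

section RandomGraph

variable {n : ℕ} {p r : ℝ}

instance : IsProbabilityMeasure (gnp n p) := by
  unfold gnp; infer_instance

/-- The potential edges at `v`: all pairs `s(v, u)` with `u ≠ v`. The degree of `v` is the number of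
them that are present. -/
def pairsAt (v : Fin n) : Finset (Sym2 (Fin n)) :=
  (Finset.univ.erase v).map (Sym2.mkEmbedding v)

lemma card_pairsAt (v : Fin n) : (pairsAt v).card = n - 1 := by
  simp [pairsAt]

lemma degB_eq_card_filter_pairsAt (ω : Sym2 (Fin n) → Bool) (v : Fin n) :
    degB ω v = ((pairsAt v).filter fun e => ω e = true).card := by
  rw [pairsAt, Finset.filter_map, Finset.card_map, degB]
  congr 1
  ext u
  simp [Sym2.eq_swap]

lemma integral_pow_degB (hp₀ : 0 ≤ p) (hp₁ : p ≤ 1) (r : ℝ) (v : Fin n) :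
    ∫ ω, r ^ degB ω v ∂gnp n p = (1 - p * (1 - r)) ^ (n - 1) := by
  simp_rw [degB_eq_card_filter_pairsAt, gnp, integral_pow_card_filter_pi_bernoulliM hp₀ hp₁,
    card_pairsAt]

/-- The vertices of degree at most `a`. The bound `a` is real so that it can be a multiple of
`log n`. -/
noncomputable def lowDegreeVertices (ω : Sym2 (Fin n) → Bool) (a : ℝ) : Finset (Fin n) :=
  Finset.univ.filter fun v => (degB ω v : ℝ) ≤ a

lemma card_lowDegreeVertices_le_sum (hr₀ : 0 < r) (hr₁ : r ≤ 1) (ω : Sym2 (Fin n) → Bool) (a : ℝ) :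
    ((lowDegreeVertices ω a).card : ℝ) ≤ ∑ v, r ^ (-a) * r ^ degB ω v := by
  have one_le_of_mem {v : Fin n} (hv : v ∈ lowDegreeVertices ω a) :
      1 ≤ r ^ (-a) * r ^ degB ω v := by
    have hdeg : (degB ω v : ℝ) ≤ a := (Finset.mem_filter.1 hv).2
    rw [← Real.rpow_natCast, ← Real.rpow_add hr₀]
    exact Real.one_le_rpow_of_pos_of_le_one_of_nonpos hr₀ hr₁ (by linarith)
  calc ((lowDegreeVertices ω a).card : ℝ)
      = ∑ _v ∈ lowDegreeVertices ω a, (1 : ℝ) := by simp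
    _ ≤ ∑ v ∈ lowDegreeVertices ω a, r ^ (-a) * r ^ degB ω v :=
        Finset.sum_le_sum fun _ hv => one_le_of_mem hv
    _ ≤ ∑ v, r ^ (-a) * r ^ degB ω v :=
        Finset.sum_le_sum_of_subset_of_nonneg (Finset.subset_univ _) fun v _ _ => by positivity

lemma integral_card_lowDegreeVertices_le (hp₀ : 0 ≤ p) (hp₁ : p ≤ 1) (hr₀ : 0 < r) (hr₁ : r ≤ 1)
    (a : ℝ) :
    ∫ ω, ((lowDegreeVertices ω a).card : ℝ) ∂gnp n p ≤
      n * (r ^ (-a) * (1 - p * (1 - r)) ^ (n - 1)) :=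
  calc ∫ ω, ((lowDegreeVertices ω a).card : ℝ) ∂gnp n p
      ≤ ∫ ω, ∑ v, r ^ (-a) * r ^ degB ω v ∂gnp n p :=
        integral_mono .of_finite .of_finite fun ω => card_lowDegreeVertices_le_sum hr₀ hr₁ ω a
    _ = ∑ v : Fin n, r ^ (-a) * ∫ ω, r ^ degB ω v ∂gnp n p := by
        rw [integral_finsetSum _ fun _ _ => .of_finite]
        simp_rw [integral_const_mul]
    _ = n * (r ^ (-a) * (1 - p * (1 - r)) ^ (n - 1)) := by
        simp [integral_pow_degB hp₀ hp₁]

end RandomGraph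

section LogarithmicDensity

variable {n : ℕ} {c p r : ℝ}

lemma one_sub_mul_pow_le (hn : n ≠ 0) (hc : 0 ≤ c) (hp : c * Real.log n / n ≤ p) (hp₁ : p ≤ 1)
    {s : ℝ} (hs₀ : 0 ≤ s) (hs₁ : s ≤ 1) :
    (1 - p * s) ^ (n - 1) ≤ Real.exp (c * s) * (n : ℝ) ^ (-(c * s)) := by
  have hn₁ : (1 : ℝ) ≤ n := by exact_mod_cast Nat.one_le_iff_ne_zero.2 hn
  have hn₀ : (0 : ℝ) < n := by linarith
  have log_div_le_one : Real.log n / n ≤ 1 := (div_le_one hn₀).2 (Real.log_le_self hn₀.le)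
  have mean_ge : c * Real.log n - c ≤ p * (n - 1) :=
    calc c * Real.log n - c ≤ c * Real.log n - c * (Real.log n / n) := by nlinarith
      _ = c * Real.log n / n * (n - 1) := by field_simp
      _ ≤ p * (n - 1) := by gcongr
  calc (1 - p * s) ^ (n - 1)
      ≤ Real.exp (-(p * s)) ^ (n - 1) :=
        pow_le_pow_left₀ (by nlinarith) (Real.one_sub_le_exp_neg _) _
    _ = Real.exp (-(p * (n - 1) * s)) := by
        rw [← Real.exp_nat_mul, Nat.cast_pred (Nat.pos_of_ne_zero hn)]
        ring_nf
    _ ≤ Real.exp (c * s + Real.log n * -(c * s)) := Real.exp_le_exp.2 (by nlinarith)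
    _ = Real.exp (c * s) * (n : ℝ) ^ (-(c * s)) := by
        rw [Real.exp_add, Real.rpow_def_of_pos hn₀]

lemma integral_card_lowDegreeVertices_mul_log_le (hn : n ≠ 0) (hc : 0 ≤ c)
    (hp : c * Real.log n / n ≤ p) (hp₁ : p ≤ 1) (hr₀ : 0 < r) (hr₁ : r ≤ 1) (α : ℝ) :
    ∫ ω, ((lowDegreeVertices ω (α * Real.log n)).card : ℝ) ∂gnp n p ≤
      Real.exp (c * (1 - r)) * (n : ℝ) ^ (1 - α * Real.log r - c * (1 - r)) := by
  have hn₀ : (0 : ℝ) < n := by exact_mod_cast Nat.pos_of_ne_zero hn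
  have hp₀ : 0 ≤ p := le_trans (by positivity) hp
  have rpow_log_comm : r ^ (-(α * Real.log n)) = (n : ℝ) ^ (-(α * Real.log r)) := by
    rw [Real.rpow_def_of_pos hr₀, Real.rpow_def_of_pos hn₀]
    ring_nf
  calc ∫ ω, ((lowDegreeVertices ω (α * Real.log n)).card : ℝ) ∂gnp n p
      ≤ n * (r ^ (-(α * Real.log n)) * (1 - p * (1 - r)) ^ (n - 1)) :=
        integral_card_lowDegreeVertices_le hp₀ hp₁ hr₀ hr₁ _
    _ ≤ n * (r ^ (-(α * Real.log n)) *
          (Real.exp (c * (1 - r)) * (n : ℝ) ^ (-(c * (1 - r))))) := by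
        gcongr
        exact one_sub_mul_pow_le hn hc hp hp₁ (by linarith) (by linarith)
    _ = Real.exp (c * (1 - r)) *
          ((n : ℝ) ^ (1 : ℝ) * (n : ℝ) ^ (-(α * Real.log r)) * (n : ℝ) ^ (-(c * (1 - r)))) := by
        rw [rpow_log_comm, Real.rpow_one]
        ring
    _ = Real.exp (c * (1 - r)) * (n : ℝ) ^ (1 - α * Real.log r - c * (1 - r)) := by
        rw [← Real.rpow_add hn₀, ← Real.rpow_add hn₀, ← sub_eq_add_neg, ← sub_eq_add_neg]

lemma measureReal_rpow_le_card_lowDegreeVertices_le (hn : n ≠ 0) (hc : 0 ≤ c)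
    (hp : c * Real.log n / n ≤ p) (hp₁ : p ≤ 1) (hr₀ : 0 < r) (hr₁ : r ≤ 1) (α β : ℝ) :
    (gnp n p).real {ω | (n : ℝ) ^ β ≤ (lowDegreeVertices ω (α * Real.log n)).card} ≤
      Real.exp (c * (1 - r)) * (n : ℝ) ^ (1 - α * Real.log r - c * (1 - r) - β) := by
  have hn₀ : (0 : ℝ) < n := by exact_mod_cast Nat.pos_of_ne_zero hn
  rw [Real.rpow_sub hn₀, ← mul_div_assoc, le_div_iff₀' (by positivity)]
  exact (mul_meas_ge_le_integral_of_nonneg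
    (ae_of_all _ fun _ => Nat.cast_nonneg _) .of_finite _).trans
    (integral_card_lowDegreeVertices_mul_log_le hn hc hp hp₁ hr₀ hr₁ α)

end LogarithmicDensity

lemma tendsto_measure_one_of_tendsto_measureReal_compl_zero {ι : Type*} {l : Filter ι}
    {Ω : ι → Type*} [∀ i, MeasurableSpace (Ω i)] {μ : ∀ i, Measure (Ω i)}
    [∀ i, IsProbabilityMeasure (μ i)] {s : ∀ i, Set (Ω i)} (hs : ∀ i, MeasurableSet (s i))
    (h : Tendsto (fun i => (μ i).real (s i)ᶜ) l (𝓝 0)) :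
    Tendsto (fun i => μ i (s i)) l (𝓝 1) := by
  simp_rw [probReal_compl_eq_one_sub (hs _)] at h
  rw [← ENNReal.tendsto_toReal_iff (fun i => measure_ne_top (μ i) (s i)) ENNReal.one_ne_top]
  simpa [measureReal_def] using h.const_sub 1

theorem few_low_degree_vertices_whp_general {c α β : ℝ} (hα : 0 < α) (hαc : α ≤ c)
    (hβ : 1 - β < c - α + α * Real.log (α / c)) (q : ℕ → ℝ)
    (hq : ∀ᶠ n : ℕ in atTop, c * Real.log n / n ≤ q n ∧ q n ≤ 1) :
    Tendsto
      (fun n : ℕ =>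
        gnp n (q n) {ω | ((lowDegreeVertices ω (α * Real.log n)).card : ℝ) < (n : ℝ) ^ β})
      atTop (𝓝 1) := by
  have hc : 0 < c := hα.trans_le hαc
  have exponent_eq : 1 - α * Real.log (α / c) - c * (1 - α / c) - β =
      -(c - α + α * Real.log (α / c) - (1 - β)) := by
    field_simp
    ring
  have bound_tendsto_zero : Tendsto
      (fun n : ℕ => Real.exp (c * (1 - α / c)) *
        (n : ℝ) ^ (1 - α * Real.log (α / c) - c * (1 - α / c) - β)) atTop (𝓝 0) := by
    rw [exponent_eq, ← mul_zero (Real.exp (c * (1 - α / c)))]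
    exact ((tendsto_rpow_neg_atTop (sub_pos.2 hβ)).comp tendsto_natCast_atTop_atTop).const_mul _
  refine tendsto_measure_one_of_tendsto_measureReal_compl_zero
    (fun _ => (Set.toFinite _).measurableSet)
    (squeeze_zero' (.of_forall fun _ => measureReal_nonneg) ?_ bound_tendsto_zero)
  filter_upwards [hq, eventually_ne_atTop 0] with n ⟨hqn, hqn₁⟩ hn
  simp only [Set.compl_ofPred, not_lt]
  exact measureReal_rpow_le_card_lowDegreeVertices_le hn hc.le hqn hqn₁ (div_pos hα hc)
    ((div_le_one hc).2 hαc) α β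

lemma neg_three_lt_log_five_div_fortyNine : -3 < Real.log (5 / 49) :=
  calc (-3 : ℝ) < -(4 * Real.log 2) := by linarith [Real.log_two_lt_d9]
    _ = Real.log ((2 ^ 4)⁻¹) := by rw [Real.log_inv, Real.log_pow, Nat.cast_ofNat]
    _ < Real.log (5 / 49) := Real.log_lt_log (by norm_num) (by norm_num)

open scoped Classical in
/-- If `q = q(n) ≥ 0.98·log n / n`, then whp fewer than `n^{0.48}`
vertices of `G_{n,q}` have degree at most `(1/10)·log n`. -/
theorem few_low_degree_vertices_whp (q : ℕ → ℝ)
    (hq : ∀ᶠ n : ℕ in atTop, 0.98 * Real.log n / n ≤ q n ∧ q n ≤ 1) :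
    Tendsto
      (fun n : ℕ =>
        gnp n (q n)
          {ω | ((Finset.univ.filter fun v : Fin n =>
                (degB ω v : ℝ) ≤ 1 / 10 * Real.log n).card : ℝ) <
              (n : ℝ) ^ (0.48 : ℝ)})
      atTop (nhds 1) := by
  have rate_gt : 1 - 0.48 < 0.98 - 1 / 10 + 1 / 10 * Real.log (1 / 10 / 0.98) := by
    rw [show (1 / 10 / 0.98 : ℝ) = 5 / 49 by norm_num]
    linarith [neg_three_lt_log_five_div_fortyNine]
  exact few_low_degree_vertices_whp_general (by norm_num) (by norm_num) rate_gt q hq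
end

section
/- Let γ = γ(n) satisfy 1/(log log n) ≤ γ ≤ 1 and let 0 ≤ q ≤ 1.01·log(n)/n. Then the probability that a binomial random variable Bin(⌊n^{1−γ}⌋, q) is at least 2/γ is o(n^{−1}); more precisely, for all sufficiently large n it is at most (2γ·log n / n^{γ})^{2/γ}. -/
open Filter

/-- The probability that `Bin(m,q)` is at least `a`, written out as the explicit binomial
upper tail `∑_{a ≤ k} C(m,k) q^k (1-q)^{m-k}`. -/
noncomputable def binomUpperTail (m : ℕ) (q a : ℝ) : ℝ :=
  ∑ k ∈ Finset.range (m + 1),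
    if a ≤ (k : ℝ) then (m.choose k : ℝ) * q ^ k * (1 - q) ^ (m - k) else 0

/-!
Write `L = log x` and `y = γ L`, so that `x ^ γ = exp y`. The mean of `Bin(⌊x ^ (1 - γ)⌋, q)` is at
most `M = (4 / e) L / exp y`, and Chernoff's bound `(e M / a) ^ a` at the level `a = 2 / γ` is
exactly `(2 y / exp y) ^ (2 / γ)`. As soon as `y ≥ 8`, the factor `2 y` is at most `exp (3 y / 8)`,
so the bound is at most `exp (-(5 y / 8) * (2 / γ)) = x ^ (-5 / 4)`, which is `o(1 / x)`.
-/

section Chernoff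

variable {m : ℕ} {q a t M : ℝ}

lemma binomUpperTail_nonneg (hq0 : 0 ≤ q) (hq1 : q ≤ 1) : 0 ≤ binomUpperTail m q a := by
  have : 0 ≤ 1 - q := sub_nonneg.2 hq1
  unfold binomUpperTail
  positivity

lemma rpow_mul_binomUpperTail_le (hq0 : 0 ≤ q) (hq1 : q ≤ 1) (ht : 1 ≤ t) :
    t ^ a * binomUpperTail m q a ≤ (q * t + (1 - q)) ^ m := by
  have : 0 ≤ 1 - q := sub_nonneg.2 hq1
  have : 0 ≤ t := zero_le_one.trans ht
  rw [binomUpperTail, add_pow, Finset.mul_sum]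
  refine Finset.sum_le_sum fun k _ => ?_
  split_ifs with hak
  · have hpow : t ^ a ≤ t ^ k := by
      simpa only [Real.rpow_natCast] using Real.rpow_le_rpow_of_exponent_le ht hak
    calc t ^ a * (m.choose k * q ^ k * (1 - q) ^ (m - k))
        ≤ t ^ k * (m.choose k * q ^ k * (1 - q) ^ (m - k)) := by gcongr
      _ = (q * t) ^ k * (1 - q) ^ (m - k) * m.choose k := by ring
  · rw [mul_zero]
    positivity

lemma mul_add_one_sub_pow_le_exp (hq0 : 0 ≤ q) (hq1 : q ≤ 1) (ht : 0 ≤ t) :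
    (q * t + (1 - q)) ^ m ≤ Real.exp (m * q * t) := by
  have : 0 ≤ 1 - q := sub_nonneg.2 hq1
  calc (q * t + (1 - q)) ^ m ≤ Real.exp (q * t) ^ m := by
        gcongr
        linarith [Real.add_one_le_exp (q * t)]
    _ = Real.exp (m * q * t) := by rw [← Real.exp_nat_mul, mul_assoc]

lemma binomUpperTail_le_exp_one_mul_div_rpow (hq0 : 0 ≤ q) (hq1 : q ≤ 1) (hM : 0 < M)
    (hmq : m * q ≤ M) (hMa : M ≤ a) :
    binomUpperTail m q a ≤ (Real.exp 1 * M / a) ^ a := by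
  have ha : 0 < a := hM.trans_le hMa
  -- `t = a / M` minimises `t ^ (-a) * exp (M * t)`.
  have ht : 0 < a / M := div_pos ha hM
  have hbound : (a / M) ^ a * binomUpperTail m q a ≤ Real.exp a :=
    calc (a / M) ^ a * binomUpperTail m q a
        ≤ (q * (a / M) + (1 - q)) ^ m :=
          rpow_mul_binomUpperTail_le hq0 hq1 ((one_le_div hM).2 hMa)
      _ ≤ Real.exp (m * q * (a / M)) := mul_add_one_sub_pow_le_exp hq0 hq1 ht.le
      _ ≤ Real.exp (M * (a / M)) := by gcongr
      _ = Real.exp a := by rw [mul_div_cancel₀ a hM.ne']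
  calc binomUpperTail m q a ≤ Real.exp a / (a / M) ^ a :=
        (le_div_iff₀' (Real.rpow_pos_of_pos ht a)).2 hbound
    _ = (Real.exp 1 / (a / M)) ^ a := by
        rw [Real.div_rpow (Real.exp_pos 1).le ht.le, Real.exp_one_rpow]
    _ = (Real.exp 1 * M / a) ^ a := by rw [div_div_eq_mul_div]

end Chernoff

section SparseBinomial

variable {x γ q : ℝ}

lemma four_div_exp_one_mul_log_div_le_one (hx : 0 < x) : 4 / Real.exp 1 * Real.log x / x ≤ 1 := by
  have hlog : Real.exp 1 * Real.log x ≤ x := by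
    simpa only [Real.exp_log hx] using Real.exp_one_mul_le_exp (x := Real.log x)
  have he : 4 / Real.exp 1 ≤ Real.exp 1 := by
    rw [div_le_iff₀ (Real.exp_pos 1)]
    nlinarith [Real.exp_one_gt_two]
  rw [div_le_one hx]
  rcases le_total 0 (Real.log x) with hpos | hneg
  · exact (mul_le_mul_of_nonneg_right he hpos).trans hlog
  · exact (mul_nonpos_of_nonneg_of_nonpos (by positivity) hneg).trans hx.le

lemma floor_rpow_one_sub_mul_le_div_rpow {b : ℝ} (hx : 0 < x) (hq0 : 0 ≤ q) (hq : q ≤ b / x) :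
    ⌊x ^ (1 - γ)⌋₊ * q ≤ b / x ^ γ :=
  calc ⌊x ^ (1 - γ)⌋₊ * q ≤ x ^ (1 - γ) * (b / x) := by
        gcongr
        exact Nat.floor_le (by positivity)
    _ = b / x ^ γ := by
        rw [Real.rpow_sub hx, Real.rpow_one]
        field_simp

lemma four_div_exp_one_mul_log_div_rpow_le_two_div (hx : 0 < x) (hγ : 0 < γ) :
    4 / Real.exp 1 * Real.log x / x ^ γ ≤ 2 / γ :=
  calc 4 / Real.exp 1 * Real.log x / x ^ γ
      = 4 / Real.exp 1 * Real.log (x ^ γ) / x ^ γ / γ := by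
        rw [Real.log_rpow hx]
        field_simp
    _ ≤ 1 / γ := by
        gcongr
        exact four_div_exp_one_mul_log_div_le_one (Real.rpow_pos_of_pos hx γ)
    _ ≤ 2 / γ := by
        gcongr
        exact one_le_two

lemma binomUpperTail_floor_rpow_le (hx : 1 < x) (hγ : 0 < γ) (hq0 : 0 ≤ q)
    (hq : q ≤ 4 / Real.exp 1 * Real.log x / x) :
    binomUpperTail ⌊x ^ (1 - γ)⌋₊ q (2 / γ) ≤ (2 * γ * Real.log x / x ^ γ) ^ (2 / γ) := by
  have hx0 : 0 < x := zero_lt_one.trans hx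
  have hlog : 0 < Real.log x := Real.log_pos hx
  have hbase : Real.exp 1 * (4 / Real.exp 1 * Real.log x / x ^ γ) / (2 / γ) =
      2 * γ * Real.log x / x ^ γ := by
    field_simp
    norm_num
  rw [← hbase]
  exact binomUpperTail_le_exp_one_mul_div_rpow hq0
    (hq.trans (four_div_exp_one_mul_log_div_le_one hx0)) (by positivity)
    (floor_rpow_one_sub_mul_le_div_rpow hx0 hq0 hq)
    (four_div_exp_one_mul_log_div_rpow_le_two_div hx0 hγ)

lemma two_mul_le_exp_of_eight_le {y : ℝ} (hy : 8 ≤ y) : 2 * y ≤ Real.exp (3 / 8 * y) := by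
  have hexp_three : 16 ≤ Real.exp 3 :=
    calc (16 : ℝ) ≤ 2.7 ^ 3 := by norm_num
      _ ≤ Real.exp 1 ^ 3 := by
        gcongr
        linarith [Real.exp_one_gt_d9]
      _ = Real.exp 3 := mod_cast Real.exp_one_pow 3
  -- The tangent line of the exponential at `3`.
  calc 2 * y ≤ 16 * (3 / 8 * y - 3 + 1) := by linarith
    _ ≤ Real.exp 3 * Real.exp (3 / 8 * y - 3) := by
        gcongr
        · linarith
        · exact Real.add_one_le_exp _
    _ = Real.exp (3 / 8 * y) := by rw [← Real.exp_add, add_sub_cancel]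

lemma mul_two_mul_log_div_rpow_rpow_le (hx : 1 < x) (hγ : 8 ≤ γ * Real.log x) :
    x * (2 * γ * Real.log x / x ^ γ) ^ (2 / γ) ≤ x ^ (-(1 / 4) : ℝ) := by
  have hx0 : 0 < x := zero_lt_one.trans hx
  have hlog : 0 < Real.log x := Real.log_pos hx
  have hγ0 : 0 < γ := pos_of_mul_pos_left (by linarith) hlog.le
  have hbase : 2 * γ * Real.log x / x ^ γ ≤ x ^ (-(5 / 8 * γ)) :=
    calc 2 * γ * Real.log x / x ^ γ ≤ x ^ (3 / 8 * γ) / x ^ γ := by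
          gcongr
          rw [Real.rpow_def_of_pos hx0, mul_assoc, mul_comm (Real.log x), mul_assoc]
          exact two_mul_le_exp_of_eight_le hγ
      _ = x ^ (-(5 / 8 * γ)) := by
          rw [← Real.rpow_sub hx0]
          ring_nf
  calc x * (2 * γ * Real.log x / x ^ γ) ^ (2 / γ)
      ≤ x * (x ^ (-(5 / 8 * γ))) ^ (2 / γ) := by gcongr
    _ = x ^ (1 : ℝ) * x ^ (-(5 / 4) : ℝ) := by
        rw [← Real.rpow_mul hx0.le, Real.rpow_one]
        congr 2
        field_simp
        norm_num
    _ = x ^ (-(1 / 4) : ℝ) := by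
        rw [← Real.rpow_add hx0]
        norm_num

end SparseBinomial

lemma eventually_mul_log_le (c : ℝ) : ∀ᶠ x : ℝ in atTop, c * Real.log x ≤ x := by
  filter_upwards [(Real.isLittleO_log_id_atTop.const_mul_left c).bound one_pos,
    eventually_ge_atTop 0] with x hx hx0
  rw [one_mul, id, Real.norm_of_nonneg hx0] at hx
  exact (Real.le_norm_self _).trans hx

lemma eventually_le_mul_log_of_one_div_log_log_le {γ : ℕ → ℝ} (c : ℝ)
    (hγ : ∀ᶠ n : ℕ in atTop, 1 / Real.log (Real.log n) ≤ γ n) :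
    ∀ᶠ n : ℕ in atTop, c ≤ γ n * Real.log n := by
  have hlog : Tendsto (fun n : ℕ => Real.log n) atTop atTop :=
    Real.tendsto_log_atTop.comp tendsto_natCast_atTop_atTop
  have hloglog : Tendsto (fun n : ℕ => Real.log (Real.log n)) atTop atTop :=
    Real.tendsto_log_atTop.comp hlog
  filter_upwards [hγ, hlog.eventually (eventually_mul_log_le c), hlog.eventually_gt_atTop 0,
    hloglog.eventually_gt_atTop 0] with n hγ hle hlog hloglog
  calc c ≤ 1 / Real.log (Real.log n) * Real.log n := by
        rwa [one_div_mul_eq_div, le_div_iff₀ hloglog]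
    _ ≤ γ n * Real.log n := by gcongr

lemma one_point_zero_one_le_four_div_exp_one : 1.01 ≤ 4 / Real.exp 1 := by
  rw [le_div_iff₀ (Real.exp_pos 1)]
  linarith [Real.exp_one_lt_d9]

theorem binomial_neighbors_in_S_tail_general {q γ : ℕ → ℝ}
    (hq : ∀ᶠ n : ℕ in atTop, 0 ≤ q n ∧ q n ≤ 4 / Real.exp 1 * Real.log n / n)
    (hγ : ∀ᶠ n : ℕ in atTop, 8 ≤ γ n * Real.log n) :
    Tendsto
      (fun n : ℕ =>
        (n : ℝ) * binomUpperTail ⌊(n : ℝ) ^ (1 - γ n)⌋₊ (q n) (2 / γ n))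
      atTop (nhds 0) ∧
    ∀ᶠ n : ℕ in atTop,
      binomUpperTail ⌊(n : ℝ) ^ (1 - γ n)⌋₊ (q n) (2 / γ n) ≤
        (2 * γ n * Real.log n / (n : ℝ) ^ (γ n)) ^ (2 / γ n) := by
  have hn : ∀ᶠ n : ℕ in atTop, (1 : ℝ) < n :=
    tendsto_natCast_atTop_atTop.eventually_gt_atTop 1
  have hbound : ∀ᶠ n : ℕ in atTop,
      binomUpperTail ⌊(n : ℝ) ^ (1 - γ n)⌋₊ (q n) (2 / γ n) ≤
        (2 * γ n * Real.log n / (n : ℝ) ^ (γ n)) ^ (2 / γ n) := by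
    filter_upwards [hn, hq, hγ] with n hn hq hγ
    have hγ0 : 0 < γ n := pos_of_mul_pos_left (by linarith) (Real.log_pos hn).le
    exact binomUpperTail_floor_rpow_le hn hγ0 hq.1 hq.2
  have hlim : Tendsto (fun n : ℕ => (n : ℝ) ^ (-(1 / 4) : ℝ)) atTop (nhds 0) :=
    (tendsto_rpow_neg_atTop (by norm_num)).comp tendsto_natCast_atTop_atTop
  refine ⟨squeeze_zero' ?_ ?_ hlim, hbound⟩
  · filter_upwards [hn, hq] with n hn hq
    have hq1 : q n ≤ 1 :=
      hq.2.trans (four_div_exp_one_mul_log_div_le_one (zero_lt_one.trans hn))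
    exact mul_nonneg n.cast_nonneg (binomUpperTail_nonneg hq.1 hq1)
  · filter_upwards [hn, hγ, hbound] with n hn hγ hbound
    exact (mul_le_mul_of_nonneg_left hbound n.cast_nonneg).trans
      (mul_two_mul_log_div_rpow_rpow_le hn hγ)

/-- Let `1/(log log n) ≤ γ = γ(n) ≤ 1` and `0 ≤ q ≤ 1.01·log n / n`.
Then `P(Bin(⌊n^{1-γ}⌋, q) ≥ 2/γ)` is `o(n⁻¹)`; more precisely, for all sufficiently
large `n` it is at most `(2γ·log n / n^γ)^{2/γ}`. -/
theorem binomial_neighbors_in_S_tail (q γ : ℕ → ℝ)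
    (hq : ∀ᶠ n : ℕ in atTop, 0 ≤ q n ∧ q n ≤ 1.01 * Real.log n / n)
    (hγ : ∀ᶠ n : ℕ in atTop, 1 / Real.log (Real.log n) ≤ γ n ∧ γ n ≤ 1) :
    Tendsto
      (fun n : ℕ =>
        (n : ℝ) * binomUpperTail ⌊(n : ℝ) ^ (1 - γ n)⌋₊ (q n) (2 / γ n))
      atTop (nhds 0) ∧
    ∀ᶠ n : ℕ in atTop,
      binomUpperTail ⌊(n : ℝ) ^ (1 - γ n)⌋₊ (q n) (2 / γ n) ≤
        (2 * γ n * Real.log n / (n : ℝ) ^ (γ n)) ^ (2 / γ n) :=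
  binomial_neighbors_in_S_tail_general
    (hq.mono fun _ hqn => ⟨hqn.1, hqn.2.trans <| by
      gcongr
      exact one_point_zero_one_le_four_div_exp_one⟩)
    (eventually_le_mul_log_of_one_div_log_log_le 8 (hγ.mono fun _ hγn => hγn.1))
end

section
/- Let β = β(n) satisfy 0 < β ≤ 1 and β·log n → ∞ as n → ∞. Then for all sufficiently large n, the probability that a binomial random variable Bin(⌊0.99·n⌋, 0.49·β·log(n)/n) is at most (β/20)·log n is strictly less than n^{−0.258·β}. -/
open Filter

/-- The probability that `Bin(m,q)` is at most `a`, written out as the explicit binomial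
lower tail `∑_{k ≤ a} C(m,k) q^k (1-q)^{m-k}`. -/
noncomputable def binomLowerTail (m : ℕ) (q a : ℝ) : ℝ :=
  ∑ k ∈ Finset.range (m + 1),
    if (k : ℝ) ≤ a then (m.choose k : ℝ) * q ^ k * (1 - q) ^ (m - k) else 0

/-!
Chernoff's method: `P(X ≤ a) ≤ e^{ta} E e^{-tX} ≤ exp (ta - mq(1 - e^{-t}))` for `X ~ Bin(m, q)` and
every `t ≥ 0`. Here `a = L / 20` with `L = β log n`, and `mq ≈ 0.4851 L`, so the optimal
`t = log (mq / a)` is about `2.27`. The choice `t = 2` suffices: `mq ≥ 0.42 L` once `n ≥ 10`, and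
`2 / 20 - 0.42 (1 - e^{-2}) < -0.258`.
-/

section Chernoff

variable {q t : ℝ}

theorem binomLowerTail_le_exp_mul_pow (m : ℕ) (a : ℝ) (hq0 : 0 ≤ q) (hq1 : q ≤ 1) (ht : 0 ≤ t) :
    binomLowerTail m q a ≤ Real.exp (t * a) * (q * Real.exp (-t) + (1 - q)) ^ m := by
  have : 0 ≤ 1 - q := sub_nonneg.2 hq1
  rw [binomLowerTail, add_pow, Finset.mul_sum]
  refine Finset.sum_le_sum fun k _ ↦ ?_
  split_ifs with hka
  · have one_le_weight : 1 ≤ Real.exp (t * a) * Real.exp (-t) ^ k := by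
      rw [← Real.exp_nat_mul, ← Real.exp_add]
      exact Real.one_le_exp (by nlinarith)
    calc (m.choose k : ℝ) * q ^ k * (1 - q) ^ (m - k)
        ≤ (m.choose k : ℝ) * q ^ k * (1 - q) ^ (m - k) *
            (Real.exp (t * a) * Real.exp (-t) ^ k) :=
          le_mul_of_one_le_right (by positivity) one_le_weight
      _ = Real.exp (t * a) *
            ((q * Real.exp (-t)) ^ k * (1 - q) ^ (m - k) * (m.choose k : ℝ)) := by ring
  · positivity

theorem binomLowerTail_le_exp (m : ℕ) (a : ℝ) (hq0 : 0 ≤ q) (hq1 : q ≤ 1) (ht : 0 ≤ t) :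
    binomLowerTail m q a ≤ Real.exp (t * a - m * q * (1 - Real.exp (-t))) := by
  have : 0 ≤ 1 - q := sub_nonneg.2 hq1
  have mgf_le : q * Real.exp (-t) + (1 - q) ≤ Real.exp (-(q * (1 - Real.exp (-t)))) := by
    linarith [Real.add_one_le_exp (-(q * (1 - Real.exp (-t))))]
  calc binomLowerTail m q a
      ≤ Real.exp (t * a) * (q * Real.exp (-t) + (1 - q)) ^ m :=
        binomLowerTail_le_exp_mul_pow m a hq0 hq1 ht
    _ ≤ Real.exp (t * a) * Real.exp (-(q * (1 - Real.exp (-t)))) ^ m := by gcongr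
    _ = Real.exp (t * a - m * q * (1 - Real.exp (-t))) := by
        rw [← Real.exp_nat_mul, ← Real.exp_add]
        ring_nf

end Chernoff

theorem exp_neg_two_lt : Real.exp (-2) < 0.14 := by
  calc Real.exp (-2) = Real.exp (-1) ^ 2 := by rw [← Real.exp_nat_mul]; norm_num
    _ < 0.3678794412 ^ 2 := by gcongr; exact Real.exp_neg_one_lt_d9
    _ < 0.14 := by norm_num

theorem binomLowerTail_div_twenty_lt_exp {m : ℕ} {q L : ℝ} (hq0 : 0 ≤ q) (hq1 : q ≤ 1)
    (hL : 0 < L) (hmean : 0.42 * L ≤ m * q) :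
    binomLowerTail m q (L / 20) < Real.exp (-0.258 * L) := by
  refine (binomLowerTail_le_exp m (L / 20) hq0 hq1 zero_le_two).trans_lt (Real.exp_lt_exp.2 ?_)
  have mean_mul_ge : 0.42 * L * 0.86 ≤ m * q * (1 - Real.exp (-2)) :=
    mul_le_mul hmean (by linarith [exp_neg_two_lt]) (by norm_num) (by positivity)
  linarith

theorem mul_le_outdegree_mean {x L : ℝ} (hx : 10 ≤ x) (hL : 0 ≤ L) :
    0.42 * L ≤ ⌊0.99 * x⌋₊ * (0.49 * L / x) := by
  have floor_ge : 0.89 * x ≤ ⌊0.99 * x⌋₊ := by linarith [Nat.sub_one_lt_floor (0.99 * x)]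
  calc 0.42 * L ≤ 0.89 * x * (0.49 * L / x) := by field_simp; linarith
    _ ≤ ⌊0.99 * x⌋₊ * (0.49 * L / x) := by gcongr

theorem mul_log_div_le_one {c x : ℝ} (hc : c ≤ 1) (hx : 1 ≤ x) : c * Real.log x / x ≤ 1 := by
  refine div_le_one_of_le₀ ?_ (by linarith)
  calc c * Real.log x ≤ Real.log x := mul_le_of_le_one_left (Real.log_nonneg hx) hc
    _ ≤ x := Real.log_le_self (by linarith)

theorem binomial_outdegree_lower_tail_general {x b : ℝ} (hx : 10 ≤ x) (hb : 0 < b)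
    (hq : 0.49 * b * Real.log x / x ≤ 1) :
    binomLowerTail ⌊0.99 * x⌋₊ (0.49 * b * Real.log x / x) (b / 20 * Real.log x) <
      x ^ (-0.258 * b) := by
  have log_pos : 0 < Real.log x := Real.log_pos (by linarith)
  have hL : 0 < b * Real.log x := by positivity
  have rpow_eq : x ^ (-0.258 * b) = Real.exp (-0.258 * (b * Real.log x)) := by
    rw [Real.rpow_def_of_pos (by linarith), mul_comm, mul_assoc]
  rw [mul_assoc 0.49] at hq ⊢
  rw [div_mul_eq_mul_div, rpow_eq]
  exact binomLowerTail_div_twenty_lt_exp (by positivity) hq hL (mul_le_outdegree_mean hx hL.le)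

/-- Let `0 < β = β(n) ≤ 1` with `β·log n → ∞`.  For all sufficiently
large `n`, the probability that `Bin(⌊0.99n⌋, 0.49·β·log n / n)` is at most
`(β/20)·log n` is strictly less than `n^{-0.258·β}`. -/
theorem binomial_outdegree_lower_tail (β : ℕ → ℝ)
    (hβ : ∀ n : ℕ, 0 < β n ∧ β n ≤ 1)
    (hβlog : Tendsto (fun n : ℕ => β n * Real.log n) atTop atTop) :
    ∀ᶠ n : ℕ in atTop,
      binomLowerTail ⌊0.99 * (n : ℝ)⌋₊ (0.49 * β n * Real.log n / n)
          (β n / 20 * Real.log n)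
        < (n : ℝ) ^ (-0.258 * β n) := by
  filter_upwards [eventually_ge_atTop 10] with n hn
  have hn' : (10 : ℝ) ≤ n := by exact_mod_cast hn
  exact binomial_outdegree_lower_tail_general hn' (hβ n).1
    (mul_log_div_le_one (by linarith [(hβ n).2]) (by linarith))
end

section
/- Let ε = ε(n) and θ = θ(n) satisfy 100/√(log log n) < ε, θ ≤ 1, let p = (1+ε)·log(n)/n and κ = ⌈(1+θ)n⌉. Then with high probability, the randomly colored random graph G_{n,p,κ} contains a rainbow path on at least n − n/(log n)^{1/3} vertices. -/
open MeasureTheory Filter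

/-- The uniform probability measure on a finite set (zero measure if the set is empty). -/
noncomputable def uniformOn {α : Type*} [MeasurableSpace α] (s : Finset α) : Measure α :=
  if h : s.Nonempty then (PMF.uniformOfFinset s h).toMeasure else 0

instance {α : Type*} [MeasurableSpace α] (s : Finset α) : SigmaFinite (uniformOn s) := by
  unfold uniformOn
  split
  · infer_instance
  · infer_instance

/-- Independent uniformly random colors from `Fin κ` on each potential edge. -/
noncomputable def colorM (n κ : ℕ) : Measure (Sym2 (Fin n) → Fin κ) :=
  Measure.pi fun _ => uniformOn (Finset.univ : Finset (Fin κ))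

/-- The randomly colored random graph `G_{n,p,κ}`. -/
noncomputable def coloredGnp (n κ : ℕ) (p : ℝ) :
    Measure ((Sym2 (Fin n) → Bool) × (Sym2 (Fin n) → Fin κ)) :=
  (gnp n p).prod (colorM n κ)

/-- `ω, c` contain a rainbow path on `m` vertices: `m` distinct vertices
`f 0, f 1, …, f (m-1)` such that each consecutive edge is present in `ω` and the colors
of the `m - 1` path edges are pairwise distinct. -/
def HasRainbowPath {n κ : ℕ} (ω : Sym2 (Fin n) → Bool) (c : Sym2 (Fin n) → Fin κ)
    (m : ℕ) : Prop :=
  ∃ f : ℕ → Fin n,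
    (∀ i < m, ∀ j < m, f i = f j → i = j) ∧
    (∀ i, i + 1 < m → ω s(f i, f (i + 1)) = true) ∧
    (∀ i, i + 1 < m → ∀ j, j + 1 < m →
      c s(f i, f (i + 1)) = c s(f j, f (j + 1)) → i = j)

/-!
Run a depth-first search that keeps a rainbow path and reveals the state of a potential edge only
when it joins the head of the path to an unvisited vertex; a query succeeds if the edge is present
and its color is not yet used on the path. Initially all `n` vertices are unvisited and none is
finished, and each move changes the difference of these two numbers by at most one, so at some
moment both are equal to some `i`. All `i ^ 2` edges between the two sets have then been
revealed, and the path has `n - 2 * i` vertices.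

At most `n` colors are ever blocked, so each query succeeds with conditional probability at least
`q = p * (1 - n / κ)`. A success removes an unvisited vertex, so the potential
`2 ^ #unvisited` shrinks on average by a factor `1 - q / 2` per query. Hence `(j + 1) ^ 2` queries
are made with probability at most `2 ^ n * (1 - q / 2) ^ (j + 1) ^ 2`, and otherwise `i ≤ j`. If
`d = 2 * (j + 1)` satisfies `8 * n ≤ q * d ^ 2`, this bound is at most `(2 / e) ^ n`.
-/

open scoped ENNReal

section PathEdges

variable {V K : Type*}

/-- The edges joining consecutive vertices of a list. -/
def pathEdges (U : List V) : List (Sym2 V) :=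
  List.zipWith (fun u v => s(u, v)) U U.tail

@[simp]
theorem pathEdges_nil : pathEdges ([] : List V) = [] := rfl

@[simp]
theorem pathEdges_singleton (v : V) : pathEdges [v] = [] := rfl

theorem pathEdges_tail (U : List V) : pathEdges U.tail = (pathEdges U).tail :=
  List.tail_zipWith.symm

theorem length_pathEdges (U : List V) : (pathEdges U).length = U.length - 1 := by
  simp [pathEdges]

/-- A rainbow path of an edge-colored graph, given as its list of vertices. The graph and its
coloring are encoded together: `x e` records whether `e` is present and which color it carries. -/
structure IsRainbowPath (x : Sym2 V → Bool × K) (U : List V) : Prop where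
  nodup : U.Nodup
  present : ∀ e ∈ pathEdges U, (x e).1 = true
  nodup_colors : ((pathEdges U).map fun e => (x e).2).Nodup

namespace IsRainbowPath

variable {x y : Sym2 V → Bool × K} {U : List V}

theorem nil : IsRainbowPath x [] :=
  ⟨List.nodup_nil, by simp, by simp⟩

theorem singleton (v : V) : IsRainbowPath x [v] :=
  ⟨List.nodup_singleton v, by simp, by simp⟩

theorem tail (h : IsRainbowPath x U) : IsRainbowPath x U.tail where
  nodup := h.nodup.tail
  present e he := h.present e (List.mem_of_mem_tail (pathEdges_tail U ▸ he))
  nodup_colors := by simpa only [pathEdges_tail, List.map_tail] using h.nodup_colors.tail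

theorem cons {w v : V} (h : IsRainbowPath x (v :: U)) (hw : w ∉ v :: U)
    (hpresent : (x s(w, v)).1 = true)
    (hcolor : (x s(w, v)).2 ∉ (pathEdges (v :: U)).map fun e => (x e).2) :
    IsRainbowPath x (w :: v :: U) where
  nodup := List.nodup_cons.2 ⟨hw, h.nodup⟩
  present := List.forall_mem_cons.2 ⟨hpresent, h.present⟩
  nodup_colors := List.nodup_cons.2 ⟨hcolor, h.nodup_colors⟩

theorem congr (h : IsRainbowPath x U) (hxy : ∀ e ∈ pathEdges U, y e = x e) :
    IsRainbowPath y U where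
  nodup := h.nodup
  present e he := hxy e he ▸ h.present e he
  nodup_colors := by
    rw [List.map_congr_left fun e he => by rw [hxy e he]]
    exact h.nodup_colors

end IsRainbowPath

end PathEdges

section HasRainbowPath

variable {n κ : ℕ}

theorem IsRainbowPath.hasRainbowPath [NeZero n] {x : Sym2 (Fin n) → Bool × Fin κ}
    {U : List (Fin n)} (h : IsRainbowPath x U) :
    HasRainbowPath (fun e => (x e).1) (fun e => (x e).2) U.length := by
  have edge_eq (i : ℕ) (hi : i + 1 < U.length) : ∃ hi' : i < (pathEdges U).length,
      (pathEdges U)[i] = s(U.getD i 0, U.getD (i + 1) 0) := by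
    refine ⟨by rw [length_pathEdges]; omega, ?_⟩
    rw [List.getD_eq_getElem _ _ (by omega), List.getD_eq_getElem _ _ hi]
    simp [pathEdges]
  refine ⟨fun i => U.getD i 0, fun i hi j hj hij => ?_, fun i hi => ?_, fun i hi j hj hij => ?_⟩
  · simp only [List.getD_eq_getElem _ _ hi, List.getD_eq_getElem _ _ hj] at hij
    exact h.nodup.getElem_inj_iff.1 hij
  · obtain ⟨hi', hei⟩ := edge_eq i hi
    exact hei ▸ h.present _ (List.getElem_mem hi')
  · obtain ⟨hi', hei⟩ := edge_eq i hi
    obtain ⟨hj', hej⟩ := edge_eq j hj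
    simp only [← hei, ← hej] at hij
    exact (h.nodup_colors.getElem_inj_iff (hi := by simpa using hi')
      (hj := by simpa using hj')).1 (by simpa using hij)

theorem HasRainbowPath.mono {ω : Sym2 (Fin n) → Bool} {c : Sym2 (Fin n) → Fin κ} {l m : ℕ}
    (hlm : l ≤ m) (h : HasRainbowPath ω c m) : HasRainbowPath ω c l := by
  obtain ⟨f, hinj, hpresent, hcolors⟩ := h
  exact ⟨f, fun i hi j hj => hinj i (by omega) j (by omega), fun i hi => hpresent i (by omega),
    fun i hi j hj => hcolors i (by omega) j (by omega)⟩

end HasRainbowPath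

section Marginal

variable {ι : Type*} [DecidableEq ι] {X : ι → Type*} [∀ i, MeasurableSpace (X i)]
  {μ : ∀ i, Measure (X i)} {f : (∀ i, X i) → ℝ≥0∞} {s : Finset ι} {x : ∀ i, X i}

theorem lmarginal_eq_zero_of_forall_eqOn_compl (h : ∀ y, (∀ i ∉ s, y i = x i) → f y = 0) :
    (∫⋯∫⁻_s, f ∂μ) x = 0 := by
  have hzero (y : ∀ i : s, X i) : f (Function.updateFinset x s y) = 0 :=
    h _ fun i hi => by simp [Function.updateFinset, hi]
  simp [lmarginal, hzero]

variable [∀ i, IsProbabilityMeasure (μ i)]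

theorem lmarginal_le_one (hf : f ≤ 1) : (∫⋯∫⁻_s, f ∂μ) x ≤ 1 :=
  calc (∫⋯∫⁻_s, f ∂μ) x ≤ (∫⋯∫⁻_s, (fun _ => 1) ∂μ) x := lmarginal_mono hf x
    _ = 1 := by simp [lmarginal]

theorem lmarginal_le_add_of_erase (hf : Measurable f) {i : ι} (hi : i ∈ s) {G : Set (X i)}
    (hG : MeasurableSet G) {a b : ℝ≥0∞}
    (ha : ∀ z ∈ G, (∫⋯∫⁻_s.erase i, f ∂μ) (Function.update x i z) ≤ a)
    (hb : ∀ z ∈ Gᶜ, (∫⋯∫⁻_s.erase i, f ∂μ) (Function.update x i z) ≤ b) :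
    (∫⋯∫⁻_s, f ∂μ) x ≤ a * μ i G + b * μ i Gᶜ := by
  rw [lmarginal_erase f hf hi, ← lintegral_add_compl _ hG, ← setLIntegral_const G a,
    ← setLIntegral_const Gᶜ b]
  exact add_le_add (setLIntegral_mono' hG ha) (setLIntegral_mono' hG.compl hb)

theorem measure_add_two_mul_measure_compl_le {Ω : Type*} [MeasurableSpace Ω] {ν : Measure Ω}
    [IsProbabilityMeasure ν] {G : Set Ω} (hG : MeasurableSet G) {q : ℝ≥0∞} (hq : q ≤ ν G) :
    ν G + 2 * ν Gᶜ ≤ 2 * (1 - q / 2) := by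
  have hq_top : q ≠ ∞ := (hq.trans_lt (measure_lt_top ν G)).ne
  rw [ENNReal.mul_sub (by simp), mul_one, ENNReal.mul_div_cancel (by simp) (by simp)]
  refine ENNReal.le_sub_of_add_le_right hq_top ?_
  calc ν G + 2 * ν Gᶜ + q ≤ ν G + 2 * ν Gᶜ + ν G := by gcongr
    _ = 2 * (ν G + ν Gᶜ) := by ring
    _ = 2 := by rw [prob_add_prob_compl hG, mul_one]

end Marginal

/-- Some rainbow path misses at most `2 * j` vertices. The depth-first search stops with equally
many finished and unvisited vertices, so the deficit is naturally even. -/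
def HasAlmostSpanningRainbowPath {V K : Type*} [Fintype V] (x : Sym2 V → Bool × K)
    (j : ℕ) : Prop :=
  ∃ U, IsRainbowPath x U ∧ Fintype.card V ≤ U.length + 2 * j

/-- A state of the depth-first search for a long rainbow path. The search maintains a rainbow
`path` growing at its head, the set of `unvisited` vertices, and the set of `revealed` potential
edges together with their states in `sample`, whose values off `revealed` are meaningless. The
vertices neither on the path nor unvisited are finished: all their edges to unvisited vertices have
been revealed. By `card_le` there are at most as many finished as unvisited vertices. -/
structure RainbowSearch (V K : Type*) [Fintype V] where
  path : List V
  unvisited : Finset V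
  revealed : Finset (Sym2 V)
  sample : Sym2 V → Bool × K
  isRainbowPath : IsRainbowPath sample path
  pathEdges_revealed : ∀ e ∈ pathEdges path, e ∈ revealed
  notMem_unvisited : ∀ v ∈ path, v ∉ unvisited
  finished_revealed : ∀ u ∉ path, u ∉ unvisited → ∀ w ∈ unvisited, s(u, w) ∈ revealed
  card_le : Fintype.card V ≤ path.length + 2 * unvisited.card

namespace RainbowSearch

variable {V K : Type*} [Fintype V]

/-- The initial state: nothing is visited or revealed. -/
def start (y : Sym2 V → Bool × K) : RainbowSearch V K where
  path := []
  unvisited := Finset.univ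
  revealed := ∅
  sample := y
  isRainbowPath := .nil
  pathEdges_revealed := by simp
  notMem_unvisited := by simp
  finished_revealed := by simp
  card_le := by rw [Finset.card_univ]; omega

variable (σ : RainbowSearch V K)

/-- The colors of the edges of the current path. -/
def usedColors : List K :=
  (pathEdges σ.path).map fun e => (σ.sample e).2

theorem length_usedColors_le : σ.usedColors.length ≤ Fintype.card V := by
  rw [usedColors, List.length_map, length_pathEdges]
  exact (Nat.sub_le _ _).trans σ.isRainbowPath.nodup.length_le_card

section Transitions

variable [DecidableEq V] {σ}

/-- Start a new path at an unvisited vertex. -/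
def addRoot (hpath : σ.path = []) {w : V} (hw : w ∈ σ.unvisited)
    (hlt : Fintype.card V < σ.path.length + 2 * σ.unvisited.card) : RainbowSearch V K where
  path := [w]
  unvisited := σ.unvisited.erase w
  revealed := σ.revealed
  sample := σ.sample
  isRainbowPath := .singleton w
  pathEdges_revealed := by simp
  notMem_unvisited := by simp
  finished_revealed u hu hu' w' hw' :=
    σ.finished_revealed u (by simp [hpath])
      (fun h => hu' (Finset.mem_erase.2 ⟨by simpa using hu, h⟩)) w' (Finset.mem_of_mem_erase hw')
  card_le := by
    have := Finset.card_erase_add_one hw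
    rw [hpath, List.length_nil] at hlt
    rw [List.length_singleton]
    omega

/-- Declare the head of the path finished, once all its edges to unvisited vertices have been
revealed. -/
def backtrack {v : V} {U : List V} (hpath : σ.path = v :: U)
    (hv : ∀ w ∈ σ.unvisited, s(w, v) ∈ σ.revealed)
    (hlt : Fintype.card V < σ.path.length + 2 * σ.unvisited.card) : RainbowSearch V K where
  path := U
  unvisited := σ.unvisited
  revealed := σ.revealed
  sample := σ.sample
  isRainbowPath := by simpa [hpath] using σ.isRainbowPath.tail
  pathEdges_revealed e he := by
    refine σ.pathEdges_revealed e (List.mem_of_mem_tail ?_)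
    rwa [← pathEdges_tail, hpath]
  notMem_unvisited u hu := σ.notMem_unvisited u (by simp [hpath, hu])
  finished_revealed u hu hu' w hw := by
    by_cases huv : u = v
    · rw [huv, Sym2.eq_swap]
      exact hv w hw
    · exact σ.finished_revealed u (by simp [hpath, huv, hu]) hu' w hw
  card_le := by
    rw [hpath, List.length_cons] at hlt
    omega

/-- Prepend an unvisited vertex to the path along a revealed edge, if that edge is present and has
a color not yet used on the path. -/
def extend {v w : V} {U : List V} (hpath : σ.path = v :: U) (hw : w ∈ σ.unvisited)
    (hrevealed : s(w, v) ∈ σ.revealed) (hpresent : (σ.sample s(w, v)).1 = true)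
    (hcolor : (σ.sample s(w, v)).2 ∉ σ.usedColors)
    (hlt : Fintype.card V < σ.path.length + 2 * σ.unvisited.card) : RainbowSearch V K where
  path := w :: v :: U
  unvisited := σ.unvisited.erase w
  revealed := σ.revealed
  sample := σ.sample
  isRainbowPath :=
    (hpath ▸ σ.isRainbowPath).cons (hpath ▸ fun h => σ.notMem_unvisited w h hw) hpresent
      (by rwa [usedColors, hpath] at hcolor)
  pathEdges_revealed := by
    have hrest := σ.pathEdges_revealed
    rw [hpath] at hrest
    exact List.forall_mem_cons.2 ⟨hrevealed, hrest⟩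
  notMem_unvisited := by
    refine List.forall_mem_cons.2 ⟨Finset.notMem_erase w _, fun u hu => ?_⟩
    exact fun h => σ.notMem_unvisited u (hpath ▸ hu) (Finset.mem_of_mem_erase h)
  finished_revealed u hu hu' w' hw' := by
    rw [List.mem_cons, not_or] at hu
    exact σ.finished_revealed u (hpath ▸ hu.2) (fun h => hu' (Finset.mem_erase.2 ⟨hu.1, h⟩)) w'
      (Finset.mem_of_mem_erase hw')
  card_le := by
    have := Finset.card_erase_add_one hw
    rw [hpath] at hlt
    simp only [List.length_cons] at hlt ⊢
    omega

/-- Reveal that the state of the potential edge `e` is `z`. -/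
def reveal {e : Sym2 V} (he : e ∉ σ.revealed) (z : Bool × K) : RainbowSearch V K where
  path := σ.path
  unvisited := σ.unvisited
  revealed := insert e σ.revealed
  sample := Function.update σ.sample e z
  isRainbowPath := σ.isRainbowPath.congr fun e' he' =>
    Function.update_of_ne (ne_of_mem_of_not_mem (σ.pathEdges_revealed e' he') he) _ _
  pathEdges_revealed e' he' := Finset.mem_insert_of_mem (σ.pathEdges_revealed e' he')
  notMem_unvisited := σ.notMem_unvisited
  finished_revealed u hu hu' w hw :=
    Finset.mem_insert_of_mem (σ.finished_revealed u hu hu' w hw)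
  card_le := σ.card_le

theorem usedColors_reveal {e : Sym2 V} (he : e ∉ σ.revealed) (z : Bool × K) :
    (σ.reveal he z).usedColors = σ.usedColors :=
  List.map_congr_left fun e' he' => congrArg Prod.snd <|
    Function.update_of_ne (ne_of_mem_of_not_mem (σ.pathEdges_revealed e' he') he) _ _

end Transitions

theorem exists_transition_without_reveal
    (hlt : Fintype.card V < σ.path.length + 2 * σ.unvisited.card)
    (hhead : ∀ v U, σ.path = v :: U → ∀ w ∈ σ.unvisited, s(w, v) ∈ σ.revealed) :
    ∃ τ : RainbowSearch V K, τ.revealed = σ.revealed ∧ τ.sample = σ.sample ∧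
      τ.unvisited.card ≤ σ.unvisited.card ∧
      2 * τ.unvisited.card + τ.path.length < 2 * σ.unvisited.card + σ.path.length := by
  classical
  rcases hpath : σ.path with _ | ⟨v, U⟩
  · obtain ⟨w, hw⟩ : σ.unvisited.Nonempty := by
      rw [hpath, List.length_nil] at hlt
      exact Finset.card_pos.1 (by omega)
    have hcard := Finset.card_erase_add_one hw
    refine ⟨addRoot hpath hw hlt, rfl, rfl, Finset.card_erase_le, ?_⟩
    simp only [addRoot, List.length_singleton, List.length_nil]
    omega
  · refine ⟨backtrack hpath (hhead v U hpath) hlt, rfl, rfl, le_rfl, ?_⟩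
    simp only [backtrack, List.length_cons]
    omega

theorem card_finished [DecidableEq V] (h : Fintype.card V = σ.path.length + 2 * σ.unvisited.card) :
    (σ.path.toFinset ∪ σ.unvisited)ᶜ.card = σ.unvisited.card := by
  have hdisj : Disjoint σ.path.toFinset σ.unvisited :=
    Finset.disjoint_left.2 fun v hv => σ.notMem_unvisited v (List.mem_toFinset.1 hv)
  rw [Finset.card_compl, Finset.card_union_of_disjoint hdisj,
    List.toFinset_card_of_nodup σ.isRainbowPath.nodup]
  omega

theorem sq_card_unvisited_le_card_revealed
    (h : Fintype.card V = σ.path.length + 2 * σ.unvisited.card) :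
    σ.unvisited.card ^ 2 ≤ σ.revealed.card := by
  classical
  set S := (σ.path.toFinset ∪ σ.unvisited)ᶜ
  have hS {u : V} (hu : u ∈ S) : u ∉ σ.path ∧ u ∉ σ.unvisited := by
    simpa [S] using hu
  calc σ.unvisited.card ^ 2 = (S ×ˢ σ.unvisited).card := by
        rw [Finset.card_product, σ.card_finished h, sq]
    _ ≤ σ.revealed.card := by
        refine Finset.card_le_card_of_injOn (fun a => s(a.1, a.2)) (fun a ha => ?_) ?_
        · obtain ⟨hu, hw⟩ := Finset.mem_product.1 ha
          exact σ.finished_revealed a.1 (hS hu).1 (hS hu).2 a.2 hw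
        · intro a ha b hb hab
          obtain ⟨hu, -⟩ := Finset.mem_product.1 ha
          obtain ⟨-, hw⟩ := Finset.mem_product.1 hb
          rcases Sym2.eq_iff.1 hab with ⟨h₁, h₂⟩ | ⟨h₁, -⟩
          · exact Prod.ext h₁ h₂
          · exact absurd (h₁ ▸ hw) (hS hu).2

variable [DecidableEq V] [MeasurableSpace K]

/-- The conditional probability, given the revealed edges, that every rainbow path misses more than
`2 * j` vertices when the states of the potential edges are independent with law `ν`. -/
noncomputable def failureProb (ν : Measure (Bool × K)) (j : ℕ) : ℝ≥0∞ :=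
  (∫⋯∫⁻_σ.revealedᶜ, {x : Sym2 V → Bool × K | ¬ HasAlmostSpanningRainbowPath x j}.indicator 1
    ∂fun _ => ν) σ.sample

theorem failureProb_start [Finite K] [MeasurableSingletonClass K] (ν : Measure (Bool × K))
    [SigmaFinite ν] (j : ℕ) (y : Sym2 V → Bool × K) :
    (start y).failureProb ν j =
      Measure.pi (fun _ : Sym2 V => ν) {x | ¬ HasAlmostSpanningRainbowPath x j} := by
  simp only [failureProb, start, Finset.compl_empty, lmarginal_univ]
  exact lintegral_indicator_one (Set.toFinite _).measurableSet

theorem failureProb_eq_zero (ν : Measure (Bool × K)) {j : ℕ}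
    (h : Fintype.card V ≤ σ.path.length + 2 * j) : σ.failureProb ν j = 0 := by
  refine lmarginal_eq_zero_of_forall_eqOn_compl fun x hx => Set.indicator_of_notMem ?_ _
  refine not_not.2 ⟨σ.path, σ.isRainbowPath.congr fun e he => hx e ?_, h⟩
  simpa using σ.pathEdges_revealed e he

variable {ν : Measure (Bool × K)} [IsProbabilityMeasure ν] {j : ℕ}

theorem failureProb_le_one : σ.failureProb ν j ≤ 1 :=
  lmarginal_le_one (Set.indicator_le_self' (by simp))

variable {σ} [Finite K] [MeasurableSingletonClass K]

theorem failureProb_le_of_reveal {e : Sym2 V} (he : e ∉ σ.revealed) (G : Set (Bool × K))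
    {a b : ℝ≥0∞} (ha : ∀ z ∈ G, (σ.reveal he z).failureProb ν j ≤ a)
    (hb : ∀ z ∈ Gᶜ, (σ.reveal he z).failureProb ν j ≤ b) :
    σ.failureProb ν j ≤ a * ν G + b * ν Gᶜ := by
  simp only [failureProb, reveal, Finset.compl_insert] at ha hb
  exact lmarginal_le_add_of_erase (μ := fun _ : Sym2 V => ν) .of_discrete (by simpa using he)
    (Set.toFinite G).measurableSet ha hb

-- A present edge of fresh color halves `2 ^ unvisited.card`, so revealing one edge multiplies the
-- bound on average by at most `q / 2 + (1 - q) = 1 - q / 2`.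
theorem failureProb_le_of_query {q : ℝ≥0∞} {t : ℕ}
    (hq : ∀ C : Finset K, C.card ≤ Fintype.card V → q ≤ ν {z | z.1 = true ∧ z.2 ∉ C})
    {v w : V} {U : List V} (hpath : σ.path = v :: U) (hw : w ∈ σ.unvisited)
    (he : s(w, v) ∉ σ.revealed)
    (hlt : Fintype.card V < σ.path.length + 2 * σ.unvisited.card)
    (ih : ∀ τ : RainbowSearch V K, τ.revealed = insert s(w, v) σ.revealed →
      2 * τ.unvisited.card + τ.path.length ≤ 2 * σ.unvisited.card + σ.path.length →
      τ.failureProb ν j ≤ 2 ^ τ.unvisited.card * (1 - q / 2) ^ t) :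
    σ.failureProb ν j ≤ 2 ^ σ.unvisited.card * (1 - q / 2) ^ (t + 1) := by
  classical
  set C := σ.usedColors.toFinset
  set G : Set (Bool × K) := {z | z.1 = true ∧ z.2 ∉ C}
  have hG : q ≤ ν G :=
    hq C ((List.toFinset_card_le _).trans σ.length_usedColors_le)
  have hcard := Finset.card_erase_add_one hw
  have hsuccess (z) (hz : z ∈ G) : (σ.reveal he z).failureProb ν j ≤
      2 ^ (σ.unvisited.erase w).card * (1 - q / 2) ^ t := by
    have hcolor : ((σ.reveal he z).sample s(w, v)).2 ∉ (σ.reveal he z).usedColors := by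
      rw [usedColors_reveal]
      simpa [reveal, C] using hz.2
    exact ih ((σ.reveal he z).extend hpath hw (Finset.mem_insert_self _ _)
      (by simpa [reveal] using hz.1) hcolor hlt) rfl (by
        simp only [extend, reveal, hpath, List.length_cons]; omega)
  have hfailure (z) (_ : z ∈ Gᶜ) : (σ.reveal he z).failureProb ν j ≤
      2 ^ σ.unvisited.card * (1 - q / 2) ^ t :=
    ih (σ.reveal he z) rfl le_rfl
  calc σ.failureProb ν j
      ≤ 2 ^ (σ.unvisited.erase w).card * (1 - q / 2) ^ t * ν G
        + 2 ^ σ.unvisited.card * (1 - q / 2) ^ t * ν Gᶜ :=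
        failureProb_le_of_reveal he G hsuccess hfailure
    _ = 2 ^ (σ.unvisited.erase w).card * (1 - q / 2) ^ t * (ν G + 2 * ν Gᶜ) := by
        rw [← hcard]; ring
    _ ≤ 2 ^ (σ.unvisited.erase w).card * (1 - q / 2) ^ t * (2 * (1 - q / 2)) := by
        gcongr
        exact measure_add_two_mul_measure_compl_le (Set.toFinite G).measurableSet hG
    _ = 2 ^ σ.unvisited.card * (1 - q / 2) ^ (t + 1) := by
        rw [← hcard]; ring

theorem failureProb_le {q : ℝ≥0∞}
    (hq : ∀ C : Finset K, C.card ≤ Fintype.card V → q ≤ ν {z | z.1 = true ∧ z.2 ∉ C}) :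
    σ.failureProb ν j ≤
      2 ^ σ.unvisited.card * (1 - q / 2) ^ ((j + 1) ^ 2 - σ.revealed.card) := by
  induction hN : σ.revealedᶜ.card + 2 * σ.unvisited.card + σ.path.length
    using Nat.strong_induction_on generalizing σ with
  | _ N ih =>
  subst hN
  rcases le_or_gt ((j + 1) ^ 2) σ.revealed.card with hmany | hfew
  · rw [Nat.sub_eq_zero_of_le hmany, pow_zero, mul_one]
    exact σ.failureProb_le_one.trans (one_le_pow₀ one_le_two)
  rcases σ.card_le.eq_or_lt with heq | hlt
  · have hunvisited : σ.unvisited.card < j + 1 :=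
      lt_of_pow_lt_pow_left₀ 2 (by simp) ((σ.sq_card_unvisited_le_card_revealed heq).trans_lt hfew)
    rw [σ.failureProb_eq_zero ν (j := j) (by omega)]
    exact zero_le
  by_cases hquery : ∃ v U, σ.path = v :: U ∧ ∃ w ∈ σ.unvisited, s(w, v) ∉ σ.revealed
  · obtain ⟨v, U, hpath, w, hw, he⟩ := hquery
    have hinsert := Finset.card_insert_of_notMem he
    obtain ⟨t, ht⟩ : ∃ t, (j + 1) ^ 2 - σ.revealed.card = t + 1 :=
      Nat.exists_eq_succ_of_ne_zero (by omega)
    rw [ht]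
    refine failureProb_le_of_query hq hpath hw he hlt fun τ hτ hτ' => ?_
    have hτt : (j + 1) ^ 2 - τ.revealed.card = t := by rw [hτ]; omega
    have hcompl : τ.revealedᶜ.card < σ.revealedᶜ.card := by
      rw [hτ, Finset.compl_insert]
      exact Finset.card_erase_lt_of_mem (Finset.mem_compl.2 he)
    exact hτt ▸ ih _ (by omega) rfl
  · push Not at hquery
    obtain ⟨τ, hrevealed, hsample, hcard, hdecreasing⟩ :=
      σ.exists_transition_without_reveal hlt hquery
    calc σ.failureProb ν j = τ.failureProb ν j := by simp only [failureProb, hrevealed, hsample]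
      _ ≤ 2 ^ τ.unvisited.card * (1 - q / 2) ^ ((j + 1) ^ 2 - τ.revealed.card) :=
        ih _ (by rw [hrevealed]; omega) rfl
      _ ≤ 2 ^ σ.unvisited.card * (1 - q / 2) ^ ((j + 1) ^ 2 - σ.revealed.card) := by
        rw [hrevealed]
        gcongr
        exact one_le_two

end RainbowSearch

theorem pi_not_hasAlmostSpanningRainbowPath_le {V K : Type*} [Fintype V] [Nonempty K] [Finite K]
    [MeasurableSpace K] [MeasurableSingletonClass K] {ν : Measure (Bool × K)}
    [IsProbabilityMeasure ν] {q : ℝ≥0∞}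
    (hq : ∀ C : Finset K, C.card ≤ Fintype.card V → q ≤ ν {z | z.1 = true ∧ z.2 ∉ C}) (j : ℕ) :
    Measure.pi (fun _ : Sym2 V => ν) {x | ¬ HasAlmostSpanningRainbowPath x j} ≤
      2 ^ Fintype.card V * (1 - q / 2) ^ (j + 1) ^ 2 := by
  classical
  rw [← RainbowSearch.failureProb_start ν j (Classical.arbitrary _)]
  exact RainbowSearch.failureProb_le hq

section ColoredGnp

variable {n κ : ℕ} {p : ℝ}

theorem bernoulliM_true (hp : p ≤ 1) : bernoulliM p {true} = ENNReal.ofReal p := by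
  have hmin : min (Real.toNNReal p) 1 = Real.toNNReal p := min_eq_left (by simpa using hp)
  rw [bernoulliM, PMF.toMeasure_apply_singleton _ _ (measurableSet_singleton _)]
  simp only [hmin]
  rfl

instance isProbabilityMeasure_uniformOn_univ [NeZero κ] :
    IsProbabilityMeasure (uniformOn (Finset.univ : Finset (Fin κ))) := by
  rw [uniformOn, dif_pos Finset.univ_nonempty]
  infer_instance

theorem uniformOn_univ_notMem [NeZero κ] (C : Finset (Fin κ)) :
    uniformOn (Finset.univ : Finset (Fin κ)) {k | k ∉ C} =
      ENNReal.ofReal (1 - C.card / κ) := by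
  have hκ : (0 : ℝ) < κ := Nat.cast_pos.2 (NeZero.pos κ)
  have hC : C.card ≤ κ := by simpa using C.card_le_univ
  have hreal : (1 - C.card / κ : ℝ) = ((κ - C.card : ℕ) : ℝ) / κ := by
    rw [Nat.cast_sub hC, sub_div, div_self hκ.ne']
  rw [uniformOn, dif_pos Finset.univ_nonempty,
    PMF.toMeasure_uniformOfFinset_apply _ _ (Set.toFinite _).measurableSet, hreal,
    ENNReal.ofReal_div_of_pos hκ]
  simp [Finset.filter_not, Finset.card_sdiff]

theorem ofReal_le_prod_present_and_fresh [NeZero κ] (hp : p ≤ 1) (hκ : n ≤ κ) (C : Finset (Fin κ))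
    (hC : C.card ≤ n) :
    ENNReal.ofReal (p * (1 - n / κ)) ≤
      (bernoulliM p).prod (uniformOn Finset.univ) {z | z.1 = true ∧ z.2 ∉ C} := by
  have hprod : {z : Bool × Fin κ | z.1 = true ∧ z.2 ∉ C} = {true} ×ˢ {k | k ∉ C} := by
    ext; simp
  have hfrac : (n : ℝ) / κ ≤ 1 := div_le_one_of_le₀ (by exact_mod_cast hκ) (Nat.cast_nonneg κ)
  rw [hprod, Measure.prod_prod, bernoulliM_true hp, uniformOn_univ_notMem,
    ENNReal.ofReal_mul' (sub_nonneg.2 hfrac)]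
  gcongr

theorem HasAlmostSpanningRainbowPath.hasRainbowPath [NeZero n] {x : Sym2 (Fin n) → Bool × Fin κ}
    {j : ℕ} (h : HasAlmostSpanningRainbowPath x j) :
    HasRainbowPath (fun e => (x e).1) (fun e => (x e).2) (n - 2 * j) := by
  obtain ⟨U, hU, hlength⟩ := h
  exact hU.hasRainbowPath.mono (by rw [Fintype.card_fin] at hlength; omega)

theorem coloredGnp_not_hasRainbowPath_le [NeZero n] (hp : p ≤ 1) (hκ : n ≤ κ) (j : ℕ) :
    coloredGnp n κ p {x | ¬ HasRainbowPath x.1 x.2 (n - 2 * j)} ≤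
      2 ^ n * (1 - ENNReal.ofReal (p * (1 - n / κ)) / 2) ^ (j + 1) ^ 2 := by
  have : NeZero κ := ⟨((NeZero.pos n).trans_le hκ).ne'⟩
  have hpreserving := measurePreserving_arrowProdEquivProdArrow Bool (Fin κ) (Sym2 (Fin n))
    (fun _ => bernoulliM p) (fun _ => uniformOn Finset.univ)
  rw [coloredGnp, gnp, colorM,
    ← hpreserving.measure_preimage (Set.toFinite _).measurableSet.nullMeasurableSet]
  refine (measure_mono ?_).trans (by
    simpa only [Fintype.card_fin] using pi_not_hasAlmostSpanningRainbowPath_le (V := Fin n)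
      (fun C hC => ofReal_le_prod_present_and_fresh hp hκ C (by simpa using hC)) j)
  exact fun x hx (h : HasAlmostSpanningRainbowPath x j) => hx h.hasRainbowPath

theorem one_sub_ofReal_le_ofReal_exp_neg (x : ℝ) :
    1 - ENNReal.ofReal x ≤ ENNReal.ofReal (Real.exp (-x)) := by
  rw [tsub_le_iff_right, ← ENNReal.ofReal_one]
  refine le_trans (ENNReal.ofReal_le_ofReal ?_) ENNReal.ofReal_add_le
  linarith [Real.one_sub_le_exp_neg x]

theorem coloredGnp_not_hasRainbowPath_le_pow [NeZero n] (hp : p ≤ 1) (hκ : n ≤ κ) {j : ℕ}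
    (hj : 2 * n ≤ p * (1 - n / κ) * (j + 1) ^ 2) :
    coloredGnp n κ p {x | ¬ HasRainbowPath x.1 x.2 (n - 2 * j)} ≤
      ENNReal.ofReal (2 * Real.exp (-1)) ^ n := by
  set q := p * (1 - n / κ)
  calc coloredGnp n κ p {x | ¬ HasRainbowPath x.1 x.2 (n - 2 * j)}
      ≤ 2 ^ n * (1 - ENNReal.ofReal q / 2) ^ (j + 1) ^ 2 :=
        coloredGnp_not_hasRainbowPath_le hp hκ j
    _ = 2 ^ n * (1 - ENNReal.ofReal (q / 2)) ^ (j + 1) ^ 2 := by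
        rw [ENNReal.ofReal_div_of_pos two_pos, ENNReal.ofReal_ofNat]
    _ ≤ 2 ^ n * ENNReal.ofReal (Real.exp (-(q / 2))) ^ (j + 1) ^ 2 := by
        gcongr
        exact one_sub_ofReal_le_ofReal_exp_neg _
    _ = 2 ^ n * ENNReal.ofReal (Real.exp (-(q * (j + 1) ^ 2 / 2))) := by
        rw [← ENNReal.ofReal_pow (Real.exp_nonneg _), ← Real.exp_nat_mul]
        push_cast
        ring_nf
    _ ≤ 2 ^ n * ENNReal.ofReal (Real.exp (-n)) := by
        gcongr
        linarith
    _ = ENNReal.ofReal (2 * Real.exp (-1)) ^ n := by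
        rw [ENNReal.ofReal_mul zero_le_two, mul_pow, ENNReal.ofReal_ofNat,
          ← ENNReal.ofReal_pow (Real.exp_nonneg _), ← Real.exp_nat_mul, mul_neg_one]

instance isProbabilityMeasure_coloredGnp [NeZero κ] : IsProbabilityMeasure (coloredGnp n κ p) := by
  unfold coloredGnp gnp colorM
  infer_instance

theorem one_sub_le_coloredGnp_hasRainbowPath (hn : 0 < n) (hp : p ≤ 1) (hκ : n ≤ κ) {d : ℝ}
    (hd : 0 ≤ d) (hdense : 8 * n ≤ p * (1 - n / κ) * d ^ 2) :
    1 - ENNReal.ofReal (2 * Real.exp (-1)) ^ n ≤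
      coloredGnp n κ p {x | ∃ m : ℕ, n - d ≤ m ∧ HasRainbowPath x.1 x.2 m} := by
  have : NeZero n := ⟨hn.ne'⟩
  have : NeZero κ := ⟨(hn.trans_le hκ).ne'⟩
  set j := ⌊d / 2⌋₊
  have hj_le : (2 * j : ℝ) ≤ d := by linarith [Nat.floor_le (div_nonneg hd zero_le_two)]
  have hj_lt : d / 2 < j + 1 := Nat.lt_floor_add_one _
  have hq : 0 ≤ p * (1 - n / κ) := by
    by_contra! hneg
    have hn' : (0 : ℝ) < n := Nat.cast_pos.2 hn
    linarith [mul_nonpos_of_nonpos_of_nonneg hneg.le (sq_nonneg d)]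
  have hj : 2 * n ≤ p * (1 - n / κ) * (j + 1) ^ 2 :=
    calc (2 * n : ℝ) ≤ p * (1 - n / κ) * (d / 2) ^ 2 := by linarith
      _ ≤ p * (1 - n / κ) * (j + 1) ^ 2 := by gcongr
  have hm : (n : ℝ) - d ≤ (n - 2 * j : ℕ) := by
    have hsub : (n : ℝ) ≤ (n - 2 * j : ℕ) + 2 * j := by exact_mod_cast le_tsub_add
    linarith
  calc 1 - ENNReal.ofReal (2 * Real.exp (-1)) ^ n
      ≤ 1 - coloredGnp n κ p {x | ¬ HasRainbowPath x.1 x.2 (n - 2 * j)} :=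
        tsub_le_tsub_left (coloredGnp_not_hasRainbowPath_le_pow hp hκ hj) 1
    _ = coloredGnp n κ p {x | ¬ HasRainbowPath x.1 x.2 (n - 2 * j)}ᶜ :=
        (prob_compl_eq_one_sub (Set.toFinite _).measurableSet).symm
    _ ≤ coloredGnp n κ p {x | ∃ m : ℕ, n - d ≤ m ∧ HasRainbowPath x.1 x.2 m} :=
        measure_mono fun _ hx => ⟨_, hm, not_not.1 hx⟩

end ColoredGnp

theorem tendsto_ofReal_two_mul_exp_neg_one_pow :
    Tendsto (fun n : ℕ => ENNReal.ofReal (2 * Real.exp (-1)) ^ n) atTop (nhds 0) := by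
  refine ENNReal.tendsto_pow_atTop_nhds_zero_of_lt_one ?_
  rw [ENNReal.ofReal_lt_one, Real.exp_neg, ← div_eq_mul_inv, div_lt_one (Real.exp_pos 1)]
  linarith [Real.add_one_lt_exp one_ne_zero]

section Parameters

theorem tendsto_log_natCast_atTop : Tendsto (fun n : ℕ => Real.log n) atTop atTop :=
  Real.tendsto_log_atTop.comp tendsto_natCast_atTop_atTop

variable {ε θ : ℕ → ℝ}

theorem pos_of_div_sqrt_lt {a b c : ℝ} (ha : 0 ≤ a) (h : a / Real.sqrt b < c) : 0 < c :=
  (div_nonneg ha (Real.sqrt_nonneg b)).trans_lt h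

theorem eventually_one_add_mul_log_div_le_one (h : ∀ᶠ n in atTop, ε n ≤ 1) :
    ∀ᶠ n : ℕ in atTop, (1 + ε n) * Real.log n / n ≤ 1 := by
  have hlog := (Real.isLittleO_log_id_atTop.comp_tendsto
    (tendsto_natCast_atTop_atTop (R := ℝ))).bound (half_pos one_pos)
  filter_upwards [h, hlog, tendsto_log_natCast_atTop.eventually_ge_atTop 0] with n hεn hn hpos
  simp only [Function.comp_apply, id_eq, Real.norm_eq_abs, Nat.abs_cast, abs_of_nonneg hpos] at hn
  refine div_le_one_of_le₀ ?_ n.cast_nonneg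
  calc (1 + ε n) * Real.log n ≤ 2 * Real.log n := by gcongr; linarith
    _ ≤ n := by linarith

theorem le_ceil_one_add_mul {a : ℝ} (ha : 0 ≤ a) (n : ℕ) : n ≤ ⌈(1 + a) * n⌉₊ := by
  have hle : (n : ℝ) ≤ (1 + a) * n := le_mul_of_one_le_left n.cast_nonneg (by linarith)
  exact_mod_cast hle.trans (Nat.le_ceil _)

theorem half_le_one_sub_div_ceil {a : ℝ} (ha : 0 ≤ a) (ha' : a ≤ 1) (n : ℕ) :
    a / 2 ≤ 1 - n / ⌈(1 + a) * n⌉₊ := by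
  have hfrac : (n : ℝ) / ⌈(1 + a) * n⌉₊ ≤ 1 - a / 2 := by
    refine div_le_of_le_mul₀ (Nat.cast_nonneg _) (by linarith) ?_
    calc (n : ℝ) ≤ (1 - a / 2) * (1 + a) * n := by
          refine le_mul_of_one_le_left n.cast_nonneg ?_
          nlinarith [mul_nonneg ha (sub_nonneg.2 ha')]
      _ ≤ (1 - a / 2) * ⌈(1 + a) * n⌉₊ := by
          rw [mul_assoc]
          gcongr
          · linarith
          · exact Nat.le_ceil _
  linarith

theorem eventually_sixteen_le_mul_rpow_log
    (hθ : ∀ᶠ n : ℕ in atTop, 100 / Real.sqrt (Real.log (Real.log n)) < θ n) :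
    ∀ᶠ n : ℕ in atTop, 16 ≤ θ n * Real.log n ^ ((1 : ℝ) / 3) := by
  filter_upwards [hθ, tendsto_log_natCast_atTop.eventually_ge_atTop 0,
    (Real.tendsto_log_atTop.comp tendsto_log_natCast_atTop).eventually_ge_atTop 1]
    with n hθn hlog (hloglog : 1 ≤ Real.log (Real.log n))
  set L := Real.log (Real.log n)
  have hθ_pos : 0 < θ n := pos_of_div_sqrt_lt (by norm_num) hθn
  have hsqrt : Real.sqrt L ≤ L := Real.sqrt_le_self_iff.2 (.inr hloglog)
  have hL : L ≤ 3 * Real.log n ^ ((1 : ℝ) / 3) := by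
    linarith [Real.log_le_rpow_div hlog (show (0 : ℝ) < 1 / 3 by norm_num)]
  have h100 : 100 < θ n * Real.sqrt L := (div_lt_iff₀ (by positivity)).1 hθn
  have hbound : θ n * Real.sqrt L ≤ θ n * (3 * Real.log n ^ ((1 : ℝ) / 3)) := by
    gcongr
    exact hsqrt.trans hL
  linarith

theorem eight_mul_le_density {n : ℕ} {ε θ : ℝ} (hε : 0 ≤ ε) (hθ : θ ≤ 1)
    (hlog : 0 < Real.log n) (hlarge : 16 ≤ θ * Real.log n ^ ((1 : ℝ) / 3)) :
    8 * n ≤ (1 + ε) * Real.log n / n * (1 - n / ⌈(1 + θ) * n⌉₊) *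
      (n / Real.log n ^ ((1 : ℝ) / 3)) ^ 2 := by
  have hcube : (Real.log n ^ ((1 : ℝ) / 3)) ^ 3 = Real.log n := by
    simpa [one_div] using Real.rpow_inv_natCast_pow hlog.le three_ne_zero
  have hl : 0 < Real.log n ^ ((1 : ℝ) / 3) := Real.rpow_pos_of_pos hlog _
  set l := Real.log n ^ ((1 : ℝ) / 3)
  have hθ_pos : 0 < θ := (pos_iff_pos_of_mul_pos (by linarith)).2 hl
  have hn : (n : ℝ) ≠ 0 := fun h => by simp [h] at hlog
  calc (8 * n : ℝ) ≤ θ * l / 2 * n := by gcongr; linarith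
    _ = Real.log n / n * (θ / 2) * (n / l) ^ 2 := by
        rw [← hcube]
        field_simp
    _ ≤ (1 + ε) * Real.log n / n * (1 - n / ⌈(1 + θ) * n⌉₊) * (n / l) ^ 2 := by
        gcongr
        · exact le_mul_of_one_le_left hlog.le (by linarith)
        · exact half_le_one_sub_div_ceil hθ_pos.le hθ n

theorem eventually_eight_mul_le_density (hε : ∀ᶠ n in atTop, 0 ≤ ε n)
    (hθ : ∀ᶠ n : ℕ in atTop, 100 / Real.sqrt (Real.log (Real.log n)) < θ n ∧ θ n ≤ 1) :
    ∀ᶠ n : ℕ in atTop, 8 * n ≤ (1 + ε n) * Real.log n / n * (1 - n / ⌈(1 + θ n) * n⌉₊) *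
      (n / Real.log n ^ ((1 : ℝ) / 3)) ^ 2 := by
  filter_upwards [hε, hθ, eventually_sixteen_le_mul_rpow_log (hθ.mono fun _ h => h.1),
    tendsto_log_natCast_atTop.eventually_gt_atTop 0] with n hεn hθn hlarge hlog
  exact eight_mul_le_density hεn hθn.2 hlog hlarge

end Parameters

theorem rainbow_long_path_whp_general (p : ℕ → ℝ) (κ : ℕ → ℕ) (d : ℕ → ℝ)
    (hp : ∀ᶠ n in atTop, p n ≤ 1) (hκ : ∀ᶠ n in atTop, n ≤ κ n) (hd : ∀ᶠ n in atTop, 0 ≤ d n)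
    (hdense : ∀ᶠ n : ℕ in atTop, 8 * n ≤ p n * (1 - n / κ n) * d n ^ 2) :
    Tendsto
      (fun n : ℕ =>
        coloredGnp n (κ n) (p n) {x | ∃ m : ℕ, (n : ℝ) - d n ≤ m ∧ HasRainbowPath x.1 x.2 m})
      atTop (nhds 1) := by
  have hlower : Tendsto (fun n : ℕ => 1 - ENNReal.ofReal (2 * Real.exp (-1)) ^ n) atTop
      (nhds 1) := by
    simpa using ENNReal.Tendsto.sub (tendsto_const_nhds (x := (1 : ℝ≥0∞)))
      tendsto_ofReal_two_mul_exp_neg_one_pow (.inl ENNReal.one_ne_top)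
  refine tendsto_of_tendsto_of_tendsto_of_le_of_le' hlower tendsto_const_nhds ?_ ?_
  · filter_upwards [hp, hκ, hd, hdense, eventually_gt_atTop 0] with n hpn hκn hdn hn hpos
    exact one_sub_le_coloredGnp_hasRainbowPath hpos hpn hκn hdn hn
  · filter_upwards [hκ, eventually_gt_atTop 0] with n hκn hpos
    have : NeZero (κ n) := ⟨(hpos.trans_le hκn).ne'⟩
    exact prob_le_one

/-- If `100/√(log log n) < ε, θ ≤ 1`, `p = (1+ε)·log n / n` and
`κ = ⌈(1+θ)n⌉`, then whp `G_{n,p,κ}` contains a rainbow path on at least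
`n - n/(log n)^{1/3}` vertices. -/
theorem rainbow_long_path_whp (ε θ : ℕ → ℝ)
    (hε : ∀ᶠ n : ℕ in atTop,
      100 / Real.sqrt (Real.log (Real.log n)) < ε n ∧ ε n ≤ 1)
    (hθ : ∀ᶠ n : ℕ in atTop,
      100 / Real.sqrt (Real.log (Real.log n)) < θ n ∧ θ n ≤ 1) :
    Tendsto
      (fun n : ℕ =>
        coloredGnp n ⌈(1 + θ n) * n⌉₊ ((1 + ε n) * Real.log n / n)
          {x | ∃ m : ℕ,
            (n : ℝ) - n / Real.log n ^ ((1 : ℝ) / 3) ≤ m ∧ HasRainbowPath x.1 x.2 m})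
      atTop (nhds 1) := by
  exact rainbow_long_path_whp_general _ _ _
    (eventually_one_add_mul_log_div_le_one (hε.mono fun _ h => h.2))
    (hθ.mono fun n h => le_ceil_one_add_mul (pos_of_div_sqrt_lt (by norm_num) h.1).le n)
    (.of_forall fun n => by have := Real.log_natCast_nonneg n; positivity)
    (eventually_eight_mul_le_density
      (hε.mono fun _ h => (pos_of_div_sqrt_lt (by norm_num) h.1).le) hθ)
end
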